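/- arXiv:1601.01775 — 3 statements merged into one kernel-verified Lean document; each statement's English description precedes it below -/
import Mathlib

section
/- Let R be a standard graded domain which is a finitely generated ℤ-algebra of characteristic 0, and let I ⊂ R be a homogeneous ideal of finite colength, such that for almost all primes p the fiber R_p = R ⊗_ℤ ℤ/pℤ is a standard graded ring of dimension d which is geometrically integral and I_p = I ⊗_ℤ ℤ/pℤ ⊂ R_p is a homogeneous ideal of finite colength. Then there exists a constant C₁, given in terms of invariants of R and I, such that for all n ≥ 1 and almost all primes p, | ℓ(R_p/I_p^{[p^n]}) / p^{nd} − ℓ(R_p/I_p^{[p^{n+1}]}) / p^{(n+1)d} | ≤ C₁ / p^{n−d+2}. -/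
/-!
The error term comes from comparing `R_p` with a free module over its Frobenius image, by means of
data chosen once over `ℤ`.

Noether normalization of `R ⊗ ℚ`, with denominators cleared, gives a polynomial ring
`A = ℤ[x₁, …, x_s] ⊆ R`, a finite `A`-subalgebra `R'` of `R` and an integer `N ≠ 0` such that
`R'[1/N] = R[1/N]`. In characteristic zero `Frac R'` is generated over `Frac A` by one `θ ∈ R'`,
and there are a polynomial `F` with `F(θ) = 0` and a nonzero multiple `c ∈ A` of `F'(θ)` with
`c R' ⊆ A[θ]`. Finally, since `R/I` is finite modulo almost all primes, each `xᵢ` satisfies a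
nonzero polynomial relation `fᵢ(xᵢ) ∈ I`. For almost all `p` these data reduce to data of the same
kind over `𝔽_p`, and `R'` maps onto `R_p`: by Chevalley's theorem `𝔽_p[x] → R_p` remains injective,
and it is finite, so that `s = d`.

Now let `B = R_p`, a domain, and `A_p = 𝔽_p[x₁, …, x_d]`. The additive map `B^(p^d) → F_* B`,
`(r_α) ↦ ∑ r_α^p x^α`, where `α` runs over `[0, p)^d`, is injective because `Frac B` is separable
over `Frac A_p`. Its image contains `A_p[θ^p]`. Applying Frobenius to the coefficients of `F` and
using that the different of `A_p[θ^p]` multiplies integral elements into `A_p[θ^p]` (Euler's trace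
formula), one finds `F'(θ)^p B ⊆ A_p[θ^p]`. Therefore `B^(p^d)` and `F_* B` embed into each other
with cokernels killed by `F'(θ)`, hence by `c`, and `p^d ℓ(B/J^[q])` differs from `ℓ(B/J^[pq])` by
at most the larger of `p^d ℓ(B/(c, J^[q]))` and `ℓ(B/(c^p, J^[pq]))`. As `J^[q]` contains the
`fᵢ(xᵢ)^q`, counting monomials bounds these lengths by `e d m h^(d-1) p^d q^(d-1)`, where `m` and
`h` bound the partial degrees of `c` and the degrees of the `fᵢ`, and `e` is the number of
generators of `R'` over `A`. Dividing by `p^((n+1)d)` with `q = p^n` bounds the difference of the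
normalized lengths by a constant times `1/p^n`, hence by the same constant times `1/p^(n-d+2)`
because `d ≥ 2`.
-/

/-!
Statement 3 (Corollary 1.2(1)): for a standard graded domain `R` which is a
finitely generated `ℤ`-algebra of characteristic `0` and a homogeneous ideal
`I ⊂ R` of finite colength, such that for almost all primes `p` the fiber
`R_p = R ⊗ ℤ/pℤ` is a standard graded ring of dimension `d` which is
geometrically integral and `I_p ⊂ R_p` has finite colength, there is a constant
`C₁` such that for all `n ≥ 1` and almost all primes `p`,
`|ℓ(R_p/I_p^{[pⁿ]})/p^{nd} − ℓ(R_p/I_p^{[p^{n+1}]})/p^{(n+1)d}| ≤ C₁/p^{n−d+2}`.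
-/

/-- The Frobenius power `I^{[q]}`: the ideal generated by `q`-th powers of
elements of `I`. -/
def Ideal.frobeniusPower {R : Type*} [CommRing R] (I : Ideal R) (q : ℕ) : Ideal R :=
  Ideal.span ((fun x => x ^ q) '' (I : Set R))

/-- The fiber `R_p = R ⊗_ℤ ℤ/pℤ`, realized as `R ⧸ (p)`. -/
abbrev modPFiber (R : Type*) [CommRing R] (p : ℕ) : Type _ :=
  R ⧸ (Ideal.span {(p : R)} : Ideal R)

/-- The image `I_p` of an ideal `I ⊆ R` in the fiber `R_p`. -/
def modPFiberIdeal {R : Type*} [CommRing R] (I : Ideal R) (p : ℕ) :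
    Ideal (modPFiber R p) :=
  I.map (Ideal.Quotient.mk _)

/-- The colength `ℓ(R_p/J)` of an ideal `J` in the fiber `R_p`, i.e. its length
as a `ℤ/pℤ`-module (= its dimension as a `ℤ/pℤ`-vector space). -/
noncomputable def fiberColength {R : Type*} [CommRing R] (p : ℕ)
    [CharP (modPFiber R p) p] (J : Ideal (modPFiber R p)) : ℕ :=
  letI : Algebra (ZMod p) (modPFiber R p) := ZMod.algebra _ p
  Module.finrank (ZMod p) (modPFiber R p ⧸ J)

/-- The fiber `R_p` is geometrically integral, i.e. `R_p ⊗ \bar𝔽_p` is a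
domain. -/
def ModPFiberGeomIntegral (R : Type*) [CommRing R] (p : ℕ) [Fact p.Prime]
    [CharP (modPFiber R p) p] : Prop :=
  letI : Algebra (ZMod p) (modPFiber R p) := ZMod.algebra _ p
  IsDomain (TensorProduct (ZMod p) (AlgebraicClosure (ZMod p)) (modPFiber R p))

/-- The ideal `J ⊆ R_p` has finite colength. -/
def ModPFiberFiniteColength {R : Type*} [CommRing R] (p : ℕ)
    [CharP (modPFiber R p) p] (J : Ideal (modPFiber R p)) : Prop :=
  letI : Algebra (ZMod p) (modPFiber R p) := ZMod.algebra _ p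
  Module.Finite (ZMod p) (modPFiber R p ⧸ J)

section MonomialCounting

open MvPolynomial

variable {k σ : Type*}

section CommRing

variable [CommRing k]

/-- The ideal `𝔞` of `k[x]` contains, for each variable `xᵢ`, a nonzero polynomial in `xᵢ` alone of
degree at most `h`. It makes the colength of `𝔞` finite, with bounds in terms of `h`. -/
def HasUnivariateRelations (𝔞 : Ideal (MvPolynomial σ k)) (h : ℕ) : Prop :=
  ∀ i, ∃ g : Polynomial k, g ≠ 0 ∧ g.natDegree ≤ h ∧ Polynomial.aeval (X i) g ∈ 𝔞

theorem HasUnivariateRelations.mono {𝔞 𝔟 : Ideal (MvPolynomial σ k)} {h : ℕ}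
    (h𝔞 : HasUnivariateRelations 𝔞 h) (h𝔟 : 𝔞 ≤ 𝔟) : HasUnivariateRelations 𝔟 h := fun i =>
  let ⟨g, hg0, hgh, hg⟩ := h𝔞 i
  ⟨g, hg0, hgh, h𝔟 hg⟩

theorem exists_hasUnivariateRelations [Finite σ] {𝔞 : Ideal (MvPolynomial σ k)}
    (h𝔞 : ∀ i, ∃ g : Polynomial k, g ≠ 0 ∧ Polynomial.aeval (X i) g ∈ 𝔞) :
    ∃ h, HasUnivariateRelations 𝔞 h := by
  have := Fintype.ofFinite σ
  choose g hg0 hg using h𝔞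
  exact ⟨Finset.univ.sup fun i => (g i).natDegree, fun i => ⟨g i, hg0 i,
    Finset.le_sup (f := fun i => (g i).natDegree) (Finset.mem_univ i), hg i⟩⟩

/-- The set of exponents with all entries less than `H`; the polynomials supported on it are those
of partial degrees less than `H`, and only `0` if `H = 0` and there are variables. -/
def exponentBox (σ : Type*) (H : ℕ) : Set (σ →₀ ℕ) := {a | ∀ i, a i < H}

theorem mul_mem_restrictSupport_exponentBox {H m : ℕ} {c f : MvPolynomial σ k}
    (hc : ∀ i, degreeOf i c ≤ m) (hf : f ∈ restrictSupport k (exponentBox σ (H - m))) :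
    c * f ∈ restrictSupport k (exponentBox σ H) := by
  have hc' : c ∈ restrictSupport k {a : σ →₀ ℕ | ∀ i, a i ≤ m} :=
    fun a ha i => degreeOf_le_iff.1 (hc i) a ha
  refine restrictSupport_mono k ?_
    (restrictSupport_add (R := k) _ _ ▸ Submodule.mul_mem_mul hc' hf)
  rintro _ ⟨a, ha, b, hb, rfl⟩ i
  have := ha i
  have := hb i
  simp only [Finsupp.add_apply]
  omega

noncomputable instance [Fintype σ] (H : ℕ) : Fintype (exponentBox σ H) :=
  open scoped Classical in
  Fintype.ofEquiv (σ → Fin H)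
    { toFun b := ⟨Finsupp.equivFunOnFinite.symm fun i => b i, fun i => (b i).2⟩
      invFun a i := ⟨a.1 i, a.2 i⟩
      left_inv b := by ext; simp
      right_inv a := by ext; simp }

instance [Finite σ] (H : ℕ) : Module.Finite k (restrictSupport k (exponentBox σ H)) :=
  have := Fintype.ofFinite σ
  Module.Finite.of_basis (basisRestrictSupport k _)

variable [Fintype σ]

theorem card_exponentBox (H : ℕ) : Fintype.card (exponentBox σ H) = H ^ Fintype.card σ := by
  classical
  rw [Fintype.ofEquiv_card, Fintype.card_fun, Fintype.card_fin]

theorem finrank_restrictSupport_exponentBox [Nontrivial k] (H : ℕ) :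
    Module.finrank k (restrictSupport k (exponentBox σ H)) = H ^ Fintype.card σ := by
  rw [Module.finrank_eq_card_basis (basisRestrictSupport k _), card_exponentBox]

theorem prod_aeval_X_mem_restrictSupport_exponentBox {H : ℕ} {r : σ → Polynomial k}
    (hr : ∀ i, (r i).degree < H) :
    ∏ i, Polynomial.aeval (X i : MvPolynomial σ k) (r i) ∈
      restrictSupport k (exponentBox σ H) := by
  classical
  have haeval (i : σ) : Polynomial.aeval (X i : MvPolynomial σ k) (r i) =
      ∑ n : Fin H, (r i).coeff n • (X i) ^ (n : ℕ) := by
    rw [Polynomial.aeval_def, Polynomial.eval₂_eq_sum]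
    simp_rw [← Algebra.smul_def]
    rw [Polynomial.sum_fin (fun n a => a • X i ^ n) (by simp) (hr i)]
  simp_rw [haeval, Fintype.prod_sum, Finset.prod_smul]
  refine sum_mem fun α _ => Submodule.smul_mem _ _ ?_
  have hmon : ∏ i, (X i : MvPolynomial σ k) ^ (α i : ℕ) =
      monomial (Finsupp.equivFunOnFinite.symm fun i => (α i : ℕ)) 1 := by
    rw [monomial_eq, Finsupp.prod_fintype _ _ (by simp)]
    simp
  rw [hmon, monomial_mem_restrictSupport]
  exact Or.inl fun i => (α i).2

end CommRing

variable [Field k]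

theorem HasUnivariateRelations.exists_mem_exponentBox_sub_mem [Finite σ]
    {𝔞 : Ideal (MvPolynomial σ k)} {H : ℕ} (h𝔞 : HasUnivariateRelations 𝔞 H)
    (f : MvPolynomial σ k) :
    ∃ t ∈ restrictSupport k (exponentBox σ H), f - t ∈ 𝔞 := by
  have := Fintype.ofFinite σ
  choose g hg0 hgH hg using h𝔞
  induction f using MvPolynomial.induction_on' with
  | add f₁ f₂ h₁ h₂ =>
    obtain ⟨t₁, ht₁, hf₁⟩ := h₁
    obtain ⟨t₂, ht₂, hf₂⟩ := h₂
    exact ⟨t₁ + t₂, add_mem ht₁ ht₂, by rw [add_sub_add_comm]; exact add_mem hf₁ hf₂⟩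
  | monomial a c =>
    let r (i : σ) : Polynomial k := Polynomial.X ^ a i % g i
    refine ⟨c • ∏ i, Polynomial.aeval (X i) (r i), Submodule.smul_mem _ _
      (prod_aeval_X_mem_restrictSupport_exponentBox fun i => ?_), ?_⟩
    · exact (Polynomial.degree_mod_lt _ (hg0 i)).trans_le
        (Polynomial.natDegree_le_iff_degree_le.1 (hgH i))
    · have hmon : monomial a c = c • ∏ i, (X i : MvPolynomial σ k) ^ a i := by
        rw [monomial_eq, smul_eq_C_mul, Finsupp.prod_fintype _ _ (by simp)]
      rw [hmon, ← smul_sub, smul_eq_C_mul]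
      refine 𝔞.mul_mem_left _ ?_
      rw [← Ideal.Quotient.mk_eq_mk_iff_sub_mem, map_prod, map_prod]
      refine Finset.prod_congr rfl fun i _ => ?_
      have hdiv := congrArg (Polynomial.aeval (X i : MvPolynomial σ k))
        (EuclideanDomain.div_add_mod (Polynomial.X ^ a i) (g i))
      rw [map_add, map_mul, map_pow, Polynomial.aeval_X] at hdiv
      rw [Ideal.Quotient.mk_eq_mk_iff_sub_mem, ← hdiv, add_sub_cancel_right]
      exact 𝔞.mul_mem_right _ (hg i)

theorem HasUnivariateRelations.mkₐ_restrictSupport_surjective [Finite σ]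
    {𝔞 : Ideal (MvPolynomial σ k)} {H : ℕ} (h𝔞 : HasUnivariateRelations 𝔞 H) :
    Function.Surjective ((Ideal.Quotient.mkₐ k 𝔞).toLinearMap.domRestrict
      (restrictSupport k (exponentBox σ H))) := by
  intro y
  obtain ⟨f, rfl⟩ := Ideal.Quotient.mk_surjective y
  obtain ⟨t, ht, hft⟩ := h𝔞.exists_mem_exponentBox_sub_mem f
  exact ⟨⟨t, ht⟩, ((Ideal.Quotient.mk_eq_mk_iff_sub_mem f t).2 hft).symm⟩

theorem HasUnivariateRelations.finite_quotient [Finite σ] {𝔞 : Ideal (MvPolynomial σ k)} {H : ℕ}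
    (h𝔞 : HasUnivariateRelations 𝔞 H) : Module.Finite k (MvPolynomial σ k ⧸ 𝔞) :=
  Module.Finite.of_surjective _ h𝔞.mkₐ_restrictSupport_surjective

theorem pow_le_sub_pow_add (H m d : ℕ) : H ^ d ≤ (H - m) ^ d + d * m * H ^ (d - 1) := by
  have hpow := abs_pow_sub_pow_le (H : ℤ) (H - m : ℕ) d
  have hsub : |(H : ℤ) - (H - m : ℕ)| ≤ m := by rw [abs_le]; omega
  have hmax : max |(H : ℤ)| |((H - m : ℕ) : ℤ)| = H := by
    rw [Nat.abs_cast, Nat.abs_cast]; exact max_eq_left (by omega)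
  rw [hmax] at hpow
  zify
  calc (H : ℤ) ^ d ≤ (H - m : ℕ) ^ d + |(H : ℤ) - (H - m : ℕ)| * d * H ^ (d - 1) := by
        linarith [le_abs_self ((H : ℤ) ^ d - (H - m : ℕ) ^ d)]
    _ ≤ (H - m : ℕ) ^ d + d * m * H ^ (d - 1) := by
        rw [mul_comm (d : ℤ)]; gcongr

/-- The multiples of `c` by polynomials of partial degrees less than `H - m` lie in the box of size
`H` and vanish in the quotient, which the box spans. -/
theorem HasUnivariateRelations.finrank_quotient_le [Fintype σ] {𝔞 : Ideal (MvPolynomial σ k)}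
    {H m : ℕ} (h𝔞 : HasUnivariateRelations 𝔞 H) {c : MvPolynomial σ k} (hc0 : c ≠ 0)
    (hcm : ∀ i, degreeOf i c ≤ m) (hc : c ∈ 𝔞) :
    Module.finrank k (MvPolynomial σ k ⧸ 𝔞) ≤
      Fintype.card σ * m * H ^ (Fintype.card σ - 1) := by
  let φ := (Ideal.Quotient.mkₐ k 𝔞).toLinearMap.domRestrict (restrictSupport k (exponentBox σ H))
  let ψ : restrictSupport k (exponentBox σ (H - m)) →ₗ[k] LinearMap.ker φ :=
    LinearMap.codRestrict _ ((LinearMap.mulLeft k c).restrict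
      fun _ => mul_mem_restrictSupport_exponentBox hcm) fun f =>
        Ideal.Quotient.eq_zero_iff_mem.2 (𝔞.mul_mem_right f.1 hc)
  have hψ : Function.Injective ψ := fun f g hfg => Subtype.ext <| mul_left_cancel₀ hc0 <|
    congrArg (fun z : LinearMap.ker φ => (z : MvPolynomial σ k)) hfg
  have hker := LinearMap.finrank_le_finrank_of_injective hψ
  have hrank := φ.finrank_range_add_finrank_ker
  rw [LinearMap.range_eq_top.2 h𝔞.mkₐ_restrictSupport_surjective, finrank_top,
    finrank_restrictSupport_exponentBox] at hrank
  rw [finrank_restrictSupport_exponentBox] at hker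
  have := pow_le_sub_pow_add H m (Fintype.card σ)
  omega

end MonomialCounting

section Colength

variable {k : Type*}

section CommRing

variable [CommRing k]

theorem finite_quotient_of_finite_quotient_comap {A B : Type*} [CommRing A] [CommRing B]
    [Algebra k A] [Algebra k B] [Algebra A B] [IsScalarTower k A B] [Module.Finite A B]
    (K : Ideal B) [Module.Finite k (A ⧸ K.comap (algebraMap A B))] : Module.Finite k (B ⧸ K) :=
  have : Module.Finite (A ⧸ K.comap (algebraMap A B)) (B ⧸ K) :=
    Module.Finite.of_restrictScalars_finite A _ _
  Module.Finite.trans (A ⧸ K.comap (algebraMap A B)) (B ⧸ K)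

theorem finite_quotient_of_le {B : Type*} [CommRing B] [Algebra k B] {I J : Ideal B} (h : I ≤ J)
    [Module.Finite k (B ⧸ I)] : Module.Finite k (B ⧸ J) :=
  Module.Finite.of_surjective (Ideal.Quotient.factorₐ k h).toLinearMap
    (Ideal.Quotient.factor_surjective h)

/-- The identification of `B^ι / K^ι` with `(B/K)^ι`, for an ideal `K` of `B`. -/
noncomputable def quotientPiEquiv {B : Type*} [CommRing B] [Algebra k B] (ι : Type*) [Fintype ι]
    (K : Ideal B) :
    ((ι → B) ⧸ Submodule.pi Set.univ fun _ : ι => K.restrictScalars k) ≃ₗ[k] (ι → B ⧸ K) :=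
  open scoped Classical in
  Submodule.quotientPi (fun _ : ι => K.restrictScalars k) ≪≫ₗ
    LinearEquiv.piCongrRight fun _ => Submodule.Quotient.restrictScalarsEquiv k K

end CommRing

variable [Field k]

theorem finrank_le_card_mul_finrank_of_span_eq_top {A M ι : Type*} [CommRing A] [Algebra k A]
    [AddCommGroup M] [Module A M] [Module k M] [IsScalarTower k A M] [Module.Finite k A]
    [Fintype ι] {ω : ι → M} (hω : Submodule.span A (Set.range ω) = ⊤) :
    Module.finrank k M ≤ Fintype.card ι * Module.finrank k A := by
  have hsurj : Function.Surjective (Fintype.linearCombination A ω) :=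
    LinearMap.range_eq_top.1 (Fintype.range_linearCombination A ω ▸ hω)
  simpa [Module.finrank_pi_fintype] using LinearMap.finrank_le_finrank_of_surjective
    (f := (Fintype.linearCombination A ω).restrictScalars k) hsurj

theorem finrank_quotient_le_card_mul_finrank_quotient_comap {A B ι : Type*} [CommRing A]
    [CommRing B] [Algebra k A] [Algebra k B] [Algebra A B] [IsScalarTower k A B] [Fintype ι]
    {ω : ι → B} (hω : Submodule.span A (Set.range ω) = ⊤) (K : Ideal B)
    [Module.Finite k (A ⧸ K.comap (algebraMap A B))] :
    Module.finrank k (B ⧸ K) ≤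
      Fintype.card ι * Module.finrank k (A ⧸ K.comap (algebraMap A B)) := by
  refine finrank_le_card_mul_finrank_of_span_eq_top (ω := fun i => Ideal.Quotient.mk K (ω i)) ?_
  rw [← Submodule.restrictScalars_eq_top_iff A, ← top_le_iff]
  have hmap := Submodule.map_span (Ideal.Quotient.mkₐ A K).toLinearMap (Set.range ω)
  rw [hω, Submodule.map_top, LinearMap.range_eq_top.2 (Ideal.Quotient.mkₐ_surjective A K),
    ← Set.range_comp] at hmap
  exact hmap.le.trans (Submodule.span_le_restrictScalars A (A ⧸ K.comap (algebraMap A B)) _)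

/-- `Φ` induces a map `M/P → M'/P'`, onto whose cokernel `M'/K'` surjects. -/
theorem finrank_quotient_le_add {M M' : Type*} [AddCommGroup M] [AddCommGroup M']
    [Module k M] [Module k M'] (Φ : M →ₗ[k] M') {P : Submodule k M} {P' K' : Submodule k M'}
    (hP : P ≤ P'.comap Φ) (hK : K' ≤ LinearMap.range Φ ⊔ P')
    [Module.Finite k (M ⧸ P)] [Module.Finite k (M' ⧸ K')] :
    Module.finrank k (M' ⧸ P') ≤ Module.finrank k (M ⧸ P) + Module.finrank k (M' ⧸ K') := by
  let Φ' := P.mapQ P' Φ hP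
  let ψ : (M' ⧸ K') →ₗ[k] ((M' ⧸ P') ⧸ LinearMap.range Φ') :=
    K'.liftQ ((LinearMap.range Φ').mkQ.comp P'.mkQ) <| by
      refine hK.trans (sup_le ?_ fun m hm => ?_)
      · rintro _ ⟨m, rfl⟩
        simp only [LinearMap.mem_ker, LinearMap.comp_apply, Submodule.mkQ_apply,
          Submodule.Quotient.mk_eq_zero]
        exact ⟨P.mkQ m, by simp [Φ']⟩
      · have hm0 : P'.mkQ m = 0 := by simpa using hm
        rw [LinearMap.mem_ker, LinearMap.comp_apply, hm0, map_zero]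
  have hψ : Function.Surjective ψ := by
    intro y
    obtain ⟨z, rfl⟩ := Submodule.mkQ_surjective _ y
    obtain ⟨m, rfl⟩ := Submodule.mkQ_surjective _ z
    exact ⟨K'.mkQ m, by simp [ψ]⟩
  have := Module.Finite.of_surjective ψ hψ
  have := Module.Finite.of_submodule_quotient (LinearMap.range Φ')
  rw [← (LinearMap.range Φ').finrank_quotient_add_finrank, add_comm]
  exact add_le_add (LinearMap.finrank_range_le Φ') (LinearMap.finrank_le_finrank_of_surjective hψ)

end Colength

section FrobeniusPower

variable {B : Type*} [CommRing B] {J : Ideal B} {p q : ℕ}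

theorem pow_mem_frobeniusPower {x : B} (hx : x ∈ J) : x ^ q ∈ J.frobeniusPower q :=
  Ideal.subset_span ⟨x, hx, rfl⟩

theorem frobeniusPower_mul_le (hp : p ≠ 0) : J.frobeniusPower (q * p) ≤ J.frobeniusPower q := by
  refine Ideal.span_le.2 ?_
  rintro _ ⟨x, hx, rfl⟩
  simp only [pow_mul, SetLike.mem_coe]
  exact Ideal.pow_mem_of_mem _ (pow_mem_frobeniusPower hx) p (Nat.pos_of_ne_zero hp)

theorem apply_mem_frobeniusPower_of_mem_mul (ψ : B →+ B)
    (hψ : ∀ x b, ψ (x ^ p * b) = x * ψ b) {z : B} (hz : z ∈ J.frobeniusPower (q * p)) :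
    ψ z ∈ J.frobeniusPower q := by
  refine Submodule.closure_induction (R := B) (p := fun z _ => ψ z ∈ J.frobeniusPower q)
    ?_ ?_ ?_ hz
  · rw [map_zero]; exact zero_mem _
  · exact fun x y _ _ hx hy => map_add ψ x y ▸ add_mem hx hy
  · rintro b _ ⟨x, hx, rfl⟩
    rw [smul_eq_mul, mul_comm b]
    beta_reduce
    rw [pow_mul, hψ]
    exact Ideal.mul_mem_right _ _ (pow_mem_frobeniusPower hx)

variable [Fact p.Prime] [CharP B p]

theorem pow_mem_frobeniusPower_mul {r : B} (hr : r ∈ J.frobeniusPower q) :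
    r ^ p ∈ J.frobeniusPower (q * p) := by
  have hle : J.frobeniusPower q ≤ (J.frobeniusPower (q * p)).comap (frobenius B p) :=
    Ideal.span_le.2 <| by
      rintro _ ⟨x, hx, rfl⟩
      exact (pow_mul x q p ▸ pow_mem_frobeniusPower hx : (x ^ q) ^ p ∈ J.frobeniusPower (q * p))
  exact hle hr

variable [Algebra (ZMod p) B] {ι : Type*} [Fintype ι] (u : ι → B)

variable (p) in
/-- The map `B^ι → F_* B`, `(rᵢ) ↦ ∑ rᵢ ^ p uᵢ`, attached to a family `u` of elements of a ring of
characteristic `p`. It is semilinear over Frobenius, but only its additivity and the semilinearity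
`frobeniusSum_smul` matter, so it is encoded as a linear map over the prime field. -/
noncomputable def frobeniusSum : (ι → B) →ₗ[ZMod p] B :=
  AddMonoidHom.toZModLinearMap p <|
    AddMonoidHom.mk' (fun r => ∑ i, r i ^ p * u i) fun r s => by
      simp only [Pi.add_apply, add_pow_char, add_mul, Finset.sum_add_distrib]

theorem frobeniusSum_apply (r : ι → B) : frobeniusSum p u r = ∑ i, r i ^ p * u i := rfl

theorem frobeniusSum_smul (b : B) (r : ι → B) :
    frobeniusSum p u (b • r) = b ^ p * frobeniusSum p u r := by
  simp only [frobeniusSum_apply, Pi.smul_apply, smul_eq_mul, mul_pow, mul_assoc, Finset.mul_sum]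

variable {u} {δ : B}

theorem finrank_quotient_frobeniusPower_mul_le
    (hδ : ∀ b, δ ^ p * b ∈ LinearMap.range (frobeniusSum p u))
    [Module.Finite (ZMod p) (B ⧸ J.frobeniusPower (q * p))] :
    Module.finrank (ZMod p) (B ⧸ J.frobeniusPower (q * p)) ≤
      Fintype.card ι * Module.finrank (ZMod p) (B ⧸ J.frobeniusPower q) +
        Module.finrank (ZMod p) (B ⧸ (Ideal.span {δ ^ p} ⊔ J.frobeniusPower (q * p))) := by
  set K := Ideal.span {δ ^ p} ⊔ J.frobeniusPower (q * p)
  have e (K : Ideal B) := Submodule.Quotient.restrictScalarsEquiv (ZMod p) K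
  have : Module.Finite (ZMod p) (B ⧸ J.frobeniusPower q) :=
    finite_quotient_of_le (frobeniusPower_mul_le (Fact.out : p.Prime).ne_zero)
  have : Module.Finite (ZMod p) (B ⧸ K) := finite_quotient_of_le le_sup_right
  have := Module.Finite.equiv (e K).symm
  have := Module.Finite.equiv (quotientPiEquiv (k := ZMod p) ι (J.frobeniusPower q)).symm
  have hadd := finrank_quotient_le_add (frobeniusSum p u)
    (P := Submodule.pi Set.univ fun _ => (J.frobeniusPower q).restrictScalars (ZMod p))
    (P' := (J.frobeniusPower (q * p)).restrictScalars (ZMod p))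
    (K' := K.restrictScalars (ZMod p))
    (fun r hr => Ideal.sum_mem _ fun i _ =>
      Ideal.mul_mem_right _ _ (pow_mem_frobeniusPower_mul (hr i trivial)))
    (fun b hb => by
      obtain ⟨y, hy, t, ht, rfl⟩ := Submodule.mem_sup.1 hb
      obtain ⟨s, rfl⟩ := Ideal.mem_span_singleton.1 hy
      exact add_mem (Submodule.mem_sup_left (hδ s)) (Submodule.mem_sup_right ht))
  rwa [(quotientPiEquiv ι _).finrank_eq, Module.finrank_pi_fintype, Finset.sum_const,
    Finset.card_univ, smul_eq_mul, (e _).finrank_eq, (e _).finrank_eq] at hadd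

/-- If `frobeniusSum p u` is injective, dividing `δ ^ p * b` by it is a map `F_* B → B^ι`, through
which the inclusion of `δ B^ι` in `B^ι` factors. -/
theorem exists_linearMap_frobeniusSum_apply (hinj : Function.Injective (frobeniusSum p u))
    (hδ : ∀ b, δ ^ p * b ∈ LinearMap.range (frobeniusSum p u)) :
    ∃ Ψ : B →ₗ[ZMod p] (ι → B), (∀ x b, Ψ (x ^ p * b) = x • Ψ b) ∧
      ∀ s, Ψ (frobeniusSum p u s) = δ • s := by
  choose Ψ hΨ using hδ
  refine ⟨AddMonoidHom.toZModLinearMap p (AddMonoidHom.mk' Ψ fun a b => hinj ?_),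
    fun x b => hinj ?_, fun s => hinj ?_⟩
  · rw [map_add, hΨ, hΨ, hΨ, mul_add]
  · change frobeniusSum p u (Ψ _) = frobeniusSum p u (x • Ψ b)
    rw [hΨ, frobeniusSum_smul, hΨ, mul_left_comm]
  · change frobeniusSum p u (Ψ _) = _
    rw [hΨ, frobeniusSum_smul]

theorem card_mul_finrank_quotient_frobeniusPower_le
    (hinj : Function.Injective (frobeniusSum p u))
    (hδ : ∀ b, δ ^ p * b ∈ LinearMap.range (frobeniusSum p u))
    [Module.Finite (ZMod p) (B ⧸ J.frobeniusPower (q * p))] :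
    Fintype.card ι * Module.finrank (ZMod p) (B ⧸ J.frobeniusPower q) ≤
      Module.finrank (ZMod p) (B ⧸ J.frobeniusPower (q * p)) +
        Fintype.card ι * Module.finrank (ZMod p)
          (B ⧸ (Ideal.span {δ} ⊔ J.frobeniusPower q)) := by
  set K := Ideal.span {δ} ⊔ J.frobeniusPower q
  obtain ⟨Ψ, hΨpow, hΨsum⟩ := exists_linearMap_frobeniusSum_apply hinj hδ
  have e (K : Ideal B) := Submodule.Quotient.restrictScalarsEquiv (ZMod p) K
  have : Module.Finite (ZMod p) (B ⧸ J.frobeniusPower q) :=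
    finite_quotient_of_le (frobeniusPower_mul_le (Fact.out : p.Prime).ne_zero)
  have : Module.Finite (ZMod p) (B ⧸ K) := finite_quotient_of_le le_sup_right
  have := Module.Finite.equiv (e (J.frobeniusPower (q * p))).symm
  have := Module.Finite.equiv (quotientPiEquiv (k := ZMod p) ι K).symm
  have hadd := finrank_quotient_le_add Ψ
    (P := (J.frobeniusPower (q * p)).restrictScalars (ZMod p))
    (P' := Submodule.pi Set.univ fun _ => (J.frobeniusPower q).restrictScalars (ZMod p))
    (K' := Submodule.pi Set.univ fun _ => K.restrictScalars (ZMod p))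
    (fun z hz i _ => apply_mem_frobeniusPower_of_mem_mul (LinearMap.proj i ∘ₗ Ψ).toAddMonoidHom
      (fun x b => congrFun (hΨpow x b) i) hz)
    (fun r hr => by
      choose y hy t ht hyt using fun i => Submodule.mem_sup.1 (hr i trivial)
      choose s hs using fun i => Ideal.mem_span_singleton.1 (hy i)
      have hr' : Ψ (frobeniusSum p u s) + t = r := by
        ext i
        simp only [hΨsum, Pi.add_apply, Pi.smul_apply, smul_eq_mul, ← hs, hyt]
      rw [← hr']
      exact add_mem (Submodule.mem_sup_left ⟨_, rfl⟩) (Submodule.mem_sup_right fun i _ => ht i))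
  rwa [(quotientPiEquiv ι _).finrank_eq, (quotientPiEquiv ι _).finrank_eq,
    Module.finrank_pi_fintype, Module.finrank_pi_fintype, Finset.sum_const, Finset.sum_const,
    Finset.card_univ, smul_eq_mul, smul_eq_mul, (e _).finrank_eq] at hadd

end FrobeniusPower

section FrobeniusSumInjective

variable {p : ℕ} [Fact p.Prime] {ι : Type*} [Fintype ι]

theorem map_frobeniusSum {B B' : Type*} [CommRing B] [CharP B p] [Algebra (ZMod p) B] [CommRing B']
    [CharP B' p] [Algebra (ZMod p) B'] (f : B →+* B') (u r : ι → B) :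
    f (frobeniusSum p u r) = frobeniusSum p (f ∘ u) (f ∘ r) := by
  simp only [frobeniusSum_apply, map_sum, map_mul, map_pow, Function.comp_apply]

section Monomial

open MvPolynomial

variable {σ : Type*} [Fintype σ]

/-- The terms of the sum have pairwise different exponents modulo `p`. -/
theorem frobeniusSum_monomial_injective : Function.Injective
    (frobeniusSum p fun α : exponentBox σ p => monomial α.1 (1 : ZMod p)) := by
  have hp : p ≠ 0 := (Fact.out : p.Prime).ne_zero
  refine (injective_iff_map_eq_zero _).2 fun a ha => funext fun α =>
    MvPolynomial.ext _ _ fun β => ?_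
  have hcoeff := congrArg (coeff (p • β + α.1)) ha
  rw [frobeniusSum_apply, coeff_sum, Finset.sum_eq_single α] at hcoeff
  · rw [coeff_mul_monomial, ← expand_zmod, coeff_expand_smul _ hp] at hcoeff
    simpa using hcoeff
  · intro α' _ hne
    rw [coeff_mul_monomial']
    split_ifs with hle
    · obtain ⟨i, hi⟩ : ∃ i, α'.1 i ≠ α.1 i := by
        by_contra! h
        exact hne (Subtype.ext (Finsupp.ext h))
      rw [← expand_zmod, coeff_expand_of_not_dvd (i := i), zero_mul]
      intro hdvd
      have hmod : α'.1 i ≡ p * β i + α.1 i [MOD p] := (Nat.modEq_iff_dvd' (hle i)).2 hdvd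
      rw [Nat.ModEq, Nat.mul_add_mod] at hmod
      exact hi (Nat.ModEq.eq_of_lt_of_lt hmod (α'.2 i) (α.2 i))
    · rfl
  · simp

end Monomial

theorem frobeniusSum_injective_of_isFractionRing {A E : Type*} [CommRing A] [CharP A p]
    [Algebra (ZMod p) A] [Field E] [CharP E p] [Algebra (ZMod p) E] [Algebra A E]
    [IsFractionRing A E] {u : ι → A} (hu : Function.Injective (frobeniusSum p u)) :
    Function.Injective (frobeniusSum p (algebraMap A E ∘ u)) := by
  rw [injective_iff_map_eq_zero] at hu ⊢
  intro r hr
  obtain ⟨s, hs⟩ := IsLocalization.exist_integer_multiples (nonZeroDivisors A) Finset.univ r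
  choose t ht using fun i => hs i (Finset.mem_univ i)
  have hst : algebraMap A E ∘ t = algebraMap A E s • r := funext fun i => by
    rw [Function.comp_apply, ht, Algebra.smul_def, Pi.smul_apply, smul_eq_mul]
  have ht0 : t = 0 := hu t <| IsFractionRing.injective A E <| by
    rw [map_frobeniusSum, hst, frobeniusSum_smul, hr, mul_zero, map_zero]
  rw [ht0] at hst
  refine ((smul_eq_zero (M := ι → E)).1 (hst.symm.trans ?_)).resolve_left
    (IsLocalization.map_units E s).ne_zero
  ext
  simp

/-- In a separable extension the `p`-th powers of a basis are again independent, so the coordinates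
of a relation in this basis are relations over `E`. -/
theorem frobeniusSum_injective_of_isSeparable {E L : Type*} [Field E] [CharP E p]
    [Algebra (ZMod p) E] [Field L] [CharP L p] [Algebra (ZMod p) L] [Algebra E L]
    [FiniteDimensional E L] [Algebra.IsSeparable E L] {u : ι → E}
    (hu : Function.Injective (frobeniusSum p u)) :
    Function.Injective (frobeniusSum p (algebraMap E L ∘ u)) := by
  have : ExpChar E p := ExpChar.prime Fact.out
  have : ExpChar L p := ExpChar.prime Fact.out
  rw [injective_iff_map_eq_zero] at hu ⊢
  intro r hr
  let b := Module.finBasis E L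
  have hb : LinearIndependent E fun j => b j ^ p := by
    simpa using b.linearIndependent.map_pow_expChar_pow_of_isSeparable p 1
  have hrp (i : ι) : r i ^ p = ∑ j, b.repr (r i) j ^ p • b j ^ p := by
    conv_lhs => rw [← b.sum_repr (r i)]
    simp only [sum_pow_char, smul_pow]
  have hsum : ∑ j, frobeniusSum p u (fun i => b.repr (r i) j) • b j ^ p = 0 := by
    rw [← hr, frobeniusSum_apply]
    simp only [frobeniusSum_apply, hrp, Finset.sum_smul, Finset.sum_mul, Function.comp_apply]
    rw [Finset.sum_comm]
    refine Finset.sum_congr rfl fun i _ => Finset.sum_congr rfl fun j _ => ?_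
    rw [mul_comm _ (u i), mul_smul, Algebra.smul_def (u i), mul_comm]
  refine funext fun i => b.ext_elem fun j => ?_
  simpa using congrFun (hu _ (Fintype.linearIndependent_iff.1 hb _ hsum j)) i

theorem frobeniusSum_injective_of_comp {B L : Type*} [CommRing B] [CharP B p]
    [Algebra (ZMod p) B] [CommRing L] [CharP L p] [Algebra (ZMod p) L] {f : B →+* L}
    (hf : Function.Injective f) {u : ι → B} (hu : Function.Injective (frobeniusSum p (f ∘ u))) :
    Function.Injective (frobeniusSum p u) := fun r s hrs =>
  hf.comp_left (hu (by rw [← map_frobeniusSum, hrs, map_frobeniusSum]))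

end FrobeniusSumInjective

section MonomialFrobeniusSum

open MvPolynomial

variable {p : ℕ} [Fact p.Prime] {σ : Type*} {B : Type*} [CommRing B]
  [Algebra (MvPolynomial σ (ZMod p)) B]

theorem HasUnivariateRelations.comap_frobeniusPower {k : Type*} [CommRing k]
    [NoZeroDivisors k] [Algebra (MvPolynomial σ k) B] {J : Ideal B} {h : ℕ}
    (hJ : HasUnivariateRelations (J.comap (algebraMap (MvPolynomial σ k) B)) h) (q : ℕ) :
    HasUnivariateRelations
      ((J.frobeniusPower q).comap (algebraMap (MvPolynomial σ k) B)) (h * q) := by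
  intro i
  obtain ⟨g, hg0, hgh, hg⟩ := hJ i
  refine ⟨g ^ q, pow_ne_zero _ hg0, ?_, ?_⟩
  · rw [Polynomial.natDegree_pow, mul_comm]
    exact Nat.mul_le_mul_right q hgh
  · rw [Ideal.mem_comap, map_pow, map_pow]
    exact pow_mem_frobeniusPower hg

variable [CharP B p] [Algebra (ZMod p) B] [Fintype σ]

theorem algebraMap_mul_pow_mem_range_frobeniusSum (a : MvPolynomial σ (ZMod p)) (b : B) :
    algebraMap (MvPolynomial σ (ZMod p)) B a * b ^ p ∈ LinearMap.range (frobeniusSum p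
      (algebraMap (MvPolynomial σ (ZMod p)) B ∘ fun α : exponentBox σ p => monomial α.1 1)) := by
  classical
  have hp : p.Prime := Fact.out
  induction a using MvPolynomial.induction_on' with
  | add f g hf hg =>
    rw [map_add, add_mul]
    exact add_mem hf hg
  | monomial γ t =>
    let α : exponentBox σ p :=
      ⟨Finsupp.equivFunOnFinite.symm fun i => γ i % p, fun i => Nat.mod_lt _ hp.pos⟩
    let β : σ →₀ ℕ := Finsupp.equivFunOnFinite.symm fun i => γ i / p
    have hγ : p • β + α.1 = γ := by
      ext i
      simp [α, β, Nat.div_add_mod]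
    refine ⟨Pi.single α (algebraMap (MvPolynomial σ (ZMod p)) B (monomial β t) * b), ?_⟩
    rw [frobeniusSum_apply, Finset.sum_eq_single α
      (fun _ _ hne => by rw [Pi.single_eq_of_ne hne, zero_pow hp.ne_zero, zero_mul]) (by simp),
      Pi.single_eq_same, mul_pow, mul_right_comm, Function.comp_apply, ← map_pow, ← map_mul,
      monomial_pow, monomial_mul, mul_one, ZMod.pow_card, hγ]

theorem mem_range_frobeniusSum_of_mem_adjoin {θ b : B}
    (hb : b ∈ Algebra.adjoin (MvPolynomial σ (ZMod p)) {θ ^ p}) :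
    b ∈ LinearMap.range (frobeniusSum p
      (algebraMap (MvPolynomial σ (ZMod p)) B ∘ fun α : exponentBox σ p => monomial α.1 1)) := by
  rw [Algebra.adjoin_singleton_eq_range_aeval] at hb
  obtain ⟨P, rfl⟩ := hb
  change Polynomial.aeval (θ ^ p) P ∈ _
  rw [Polynomial.aeval_eq_sum_range]
  refine Submodule.sum_mem _ fun i _ => ?_
  rw [Algebra.smul_def, pow_right_comm]
  exact algebraMap_mul_pow_mem_range_frobeniusSum _ _

end MonomialFrobeniusSum

section Different

open Polynomial IntermediateField

theorem isSeparable_of_aeval_derivative_ne_zero {E L : Type*} [Field E] [Field L] [Algebra E L]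
    {t : L} {G : E[X]} (hG : aeval t G = 0) (hG' : aeval t (derivative G) ≠ 0) :
    IsSeparable E t := by
  have hG0 : G ≠ 0 := by
    rintro rfl
    exact hG' (by simp)
  obtain ⟨H, rfl⟩ := minpoly.dvd E t hG
  rw [IsSeparable, separable_iff_derivative_ne_zero
    (minpoly.irreducible (IsAlgebraic.isIntegral ⟨_, hG0, hG⟩))]
  intro h0
  exact hG' (by simp [derivative_mul, h0])

variable {A E L : Type*} [CommRing A] [IsDomain A] [IsIntegrallyClosed A] [Field E] [Field L]
  [Algebra A E] [IsFractionRing A E] [Algebra A L] [Algebra E L] [IsScalarTower A E L]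
  [FiniteDimensional E L] [Algebra.IsSeparable E L] {u z : L}

/-- Integral elements have integral traces, so they lie in the trace dual of `A[u]`, which is
`A[u]` divided by the derivative of the minimal polynomial at `u`. -/
theorem aeval_derivative_minpoly_mul_mem_adjoin (hu : IsIntegral A u)
    (hgen : Algebra.adjoin E {u} = ⊤) (hz : IsIntegral A z) :
    aeval u (derivative (minpoly E u)) * z ∈ Algebra.adjoin A {u} := by
  have hz' : z ∈ (Algebra.traceForm E L).dualSubmodule
      (Subalgebra.toSubmodule (Algebra.adjoin A {u})) := by
    rw [LinearMap.BilinForm.mem_dualSubmodule]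
    intro y hy
    rw [Submodule.mem_one, Algebra.traceForm_apply]
    have hy' : IsIntegral A y := (Algebra.IsIntegral.adjoin (by simpa using hu)).isIntegral
      (⟨y, hy⟩ : Algebra.adjoin A {u}) |>.map (Algebra.adjoin A {u}).val
    exact IsIntegrallyClosed.isIntegral_iff.1 (Algebra.isIntegral_trace (hz.mul hy'))
  rw [traceForm_dualSubmodule_adjoin A E hgen hu] at hz'
  have hne : aeval u (derivative (minpoly E u)) ≠ 0 :=
    (Algebra.IsSeparable.isSeparable E u).aeval_derivative_ne_zero (minpoly.aeval _ _)
  obtain ⟨y, hy, rfl⟩ := hz'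
  simpa [hne] using hy

theorem aeval_derivative_mul_mem_adjoin {B : Type*} [CommRing B] [Algebra A B]
    [Algebra.IsIntegral A B] [Algebra B L] [FaithfulSMul B L] [IsScalarTower A B L] {θ : B}
    (hgen : Algebra.adjoin E {algebraMap B L θ} = ⊤) {F : A[X]} (hF : aeval θ F = 0) (b : B) :
    aeval θ (derivative F) * b ∈ Algebra.adjoin A {θ} := by
  have : FaithfulSMul A L := FaithfulSMul.trans A E L
  have hint (b : B) : IsIntegral A (algebraMap B L b) :=
    (Algebra.IsIntegral.isIntegral b).algebraMap
  obtain ⟨H, hH⟩ := minpoly.isIntegrallyClosed_dvd (hint θ) (p := F)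
    (by rw [aeval_algebraMap_apply, hF, map_zero])
  have hder : algebraMap B L (aeval θ (derivative F)) = aeval (algebraMap B L θ) H *
      aeval (algebraMap B L θ) (derivative (minpoly E (algebraMap B L θ))) := by
    rw [minpoly.isIntegrallyClosed_eq_field_fractions' E (hint θ), derivative_map,
      aeval_map_algebraMap, ← aeval_algebraMap_apply, hH, derivative_mul, map_add, map_mul,
      map_mul, minpoly.aeval]
    ring
  have hmem : algebraMap B L (aeval θ (derivative F) * b) ∈
      Algebra.adjoin A {algebraMap B L θ} := by
    rw [map_mul, hder, mul_assoc]
    exact mul_mem (aeval_mem_adjoin_singleton _ _)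
      (aeval_derivative_minpoly_mul_mem_adjoin (hint θ) hgen (hint b))
  rw [Algebra.adjoin_singleton_eq_range_aeval] at hmem ⊢
  obtain ⟨P, hP⟩ := hmem
  exact ⟨P, FaithfulSMul.algebraMap_injective B L ((aeval_algebraMap_apply L θ P).symm.trans hP)⟩

end Different

section SeparableGenerator

open Polynomial IntermediateField nonZeroDivisors

/-- `θ` generates `B` birationally and separably over `A`, as witnessed by a polynomial `F` with
root `θ` and a nonzero multiple `c` of `F'(θ)` in `A` that conducts `B` into `A[θ]`. Only identities
and memberships occur besides `c ≠ 0`, so that these data can be reduced modulo primes. -/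
structure IsSeparableGenerator {A B : Type*} [CommRing A] [CommRing B] [Algebra A B] (θ : B)
    (F : A[X]) (c : A) : Prop where
  ne_zero : c ≠ 0
  aeval_eq_zero : aeval θ F = 0
  aeval_derivative_dvd : aeval θ (derivative F) ∣ algebraMap A B c
  smul_mem_adjoin : ∀ b : B, c • b ∈ Algebra.adjoin A {θ}

namespace IsSeparableGenerator

variable {A B : Type*} [CommRing A] [CommRing B] [Algebra A B] {θ : B} {F : A[X]} {c : A}

theorem map {A' B' : Type*} [CommRing A'] [CommRing B'] [Algebra A' B']
    (hθ : IsSeparableGenerator θ F c) {ρ : A →+* A'} {π : B →+* B'} (hπ : Function.Surjective π)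
    (hρπ : (algebraMap A' B').comp ρ = π.comp (algebraMap A B)) (hc : ρ c ≠ 0) :
    IsSeparableGenerator (π θ) (F.map ρ) (ρ c) where
  ne_zero := hc
  aeval_eq_zero := by rw [← map_aeval_eq_aeval_map hρπ, hθ.aeval_eq_zero, map_zero]
  aeval_derivative_dvd := by
    rw [derivative_map, ← map_aeval_eq_aeval_map hρπ, ← RingHom.comp_apply, hρπ]
    exact map_dvd π hθ.aeval_derivative_dvd
  smul_mem_adjoin b' := by
    obtain ⟨b, rfl⟩ := hπ b'
    have hb := hθ.smul_mem_adjoin b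
    rw [Algebra.adjoin_singleton_eq_range_aeval] at hb ⊢
    obtain ⟨P, hP⟩ := hb
    refine ⟨P.map ρ, ?_⟩
    change aeval (π θ) (P.map ρ) = _
    rw [← map_aeval_eq_aeval_map hρπ, Algebra.smul_def, ← RingHom.comp_apply, hρπ,
      RingHom.comp_apply, ← map_mul, ← Algebra.smul_def]
    exact congrArg π hP

variable [FaithfulSMul A B] (E L : Type*) [Field E] [Field L] [Algebra A E] [Algebra B L]
  [IsFractionRing B L] [Algebra A L] [IsScalarTower A B L] [Algebra E L] [IsScalarTower A E L]

theorem isSeparable (hθ : IsSeparableGenerator θ F c) : IsSeparable E (algebraMap B L θ) := by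
  refine isSeparable_of_aeval_derivative_ne_zero (G := F.map (algebraMap A E)) ?_ ?_
  · rw [aeval_map_algebraMap, aeval_algebraMap_apply, hθ.aeval_eq_zero, map_zero]
  · rw [derivative_map, aeval_map_algebraMap, aeval_algebraMap_apply]
    refine (map_ne_zero_iff _ (IsFractionRing.injective B L)).2 fun h0 => hθ.ne_zero ?_
    exact (map_eq_zero_iff _ (FaithfulSMul.algebraMap_injective A B)).1
      (zero_dvd_iff.1 (h0 ▸ hθ.aeval_derivative_dvd))

theorem adjoin_eq_top (hθ : IsSeparableGenerator θ F c) : E⟮algebraMap B L θ⟯ = ⊤ := by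
  have : FaithfulSMul A L := FaithfulSMul.trans A B L
  have hc : algebraMap A L c ≠ 0 :=
    (map_ne_zero_iff _ (FaithfulSMul.algebraMap_injective A L)).2 hθ.ne_zero
  have hB (b : B) : algebraMap B L b ∈ E⟮algebraMap B L θ⟯ := by
    have hb := hθ.smul_mem_adjoin b
    rw [Algebra.adjoin_singleton_eq_range_aeval] at hb
    obtain ⟨P, hP⟩ := hb
    have hb' : algebraMap B L b = (algebraMap A L c)⁻¹ * aeval (algebraMap B L θ) P := by
      rw [aeval_algebraMap_apply, eq_inv_mul_iff_mul_eq₀ hc, IsScalarTower.algebraMap_apply A B L,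
        ← map_mul, ← Algebra.smul_def]
      exact congrArg _ hP.symm
    rw [hb', IsScalarTower.algebraMap_apply A E L, ← aeval_map_algebraMap E]
    exact mul_mem (inv_mem (E⟮algebraMap B L θ⟯.algebraMap_mem _))
      (algebra_adjoin_le_adjoin _ _ (aeval_mem_adjoin_singleton _ _))
  refine eq_top_iff.2 fun z _ => ?_
  obtain ⟨x, y, _, rfl⟩ := IsFractionRing.div_surjective (A := B) z
  exact div_mem (hB x) (hB y)

theorem finiteDimensional (hθ : IsSeparableGenerator θ F c) : FiniteDimensional E L := by
  have := adjoin.finiteDimensional (hθ.isSeparable E L).isIntegral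
  rw [hθ.adjoin_eq_top E L] at this
  exact Module.Finite.equiv (topEquiv (F := E) (E := L)).toLinearEquiv

theorem algebra_isSeparable (hθ : IsSeparableGenerator θ F c) : Algebra.IsSeparable E L := by
  have := (isSeparable_adjoin_simple_iff_isSeparable E L).2 (hθ.isSeparable E L)
  rw [hθ.adjoin_eq_top E L] at this
  exact AlgEquiv.Algebra.isSeparable (topEquiv (F := E) (E := L))

/-- The different lemma, applied to `θ ^ p` and the polynomial `F` with coefficients raised to the
`p`-th power. -/
theorem aeval_derivative_pow_mul_mem_adjoin [IsDomain A] [IsIntegrallyClosed A] [IsDomain B]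
    [Algebra.IsIntegral A B]
    (p : ℕ) [Fact p.Prime] [CharP A p] [CharP B p] (hθ : IsSeparableGenerator θ F c) (b : B) :
    aeval θ (derivative F) ^ p * b ∈ Algebra.adjoin A {θ ^ p} := by
  let E := FractionRing A
  let L := FractionRing B
  let _ : Algebra E L := FractionRing.liftAlgebra A L
  have : IsScalarTower A E L := FractionRing.isScalarTower_liftAlgebra A L
  have := hθ.finiteDimensional E L
  have := hθ.algebra_isSeparable E L
  have : CharP E p := charP_of_injective_algebraMap (IsFractionRing.injective A E) p
  have : ExpChar E p := ExpChar.prime Fact.out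
  have hfrob (P : A[X]) : aeval (θ ^ p) (P.map (frobenius A p)) = aeval θ P ^ p :=
    (map_aeval_eq_aeval_map (φ := frobenius A p) (ψ := frobenius B p)
      (by ext a; simp [frobenius_def]) P θ).symm
  have hgen : Algebra.adjoin E {algebraMap B L (θ ^ p)} = ⊤ := by
    rw [← adjoin_simple_toSubalgebra_of_isAlgebraic (Algebra.IsAlgebraic.isAlgebraic _), map_pow,
      ← adjoin_simple_eq_adjoin_pow_expChar_of_isSeparable E L (hθ.isSeparable E L) p,
      hθ.adjoin_eq_top E L, top_toSubalgebra]
  have hmem := aeval_derivative_mul_mem_adjoin hgen (F := F.map (frobenius A p))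
    (by rw [hfrob, hθ.aeval_eq_zero, zero_pow (Fact.out : p.Prime).ne_zero]) b
  rwa [derivative_map, hfrob] at hmem

end IsSeparableGenerator

theorem exists_isSeparableGenerator_of_adjoin_eq_top {A B E L : Type*} [CommRing A] [IsDomain A]
    [CharZero A] [IsIntegrallyClosed A] [CommRing B] [IsDomain B] [Algebra A B]
    [Algebra.IsIntegral A B] [Field E] [Field L] [Algebra A E] [IsFractionRing A E] [Algebra B L]
    [IsFractionRing B L] [Algebra A L] [IsScalarTower A B L] [Algebra E L] [IsScalarTower A E L]
    [FiniteDimensional E L] {θ : B} (hgen : Algebra.adjoin E {algebraMap B L θ} = ⊤) :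
    ∃ (F : A[X]) (c : A), IsSeparableGenerator θ F c := by
  have : CharZero E := charZero_of_injective_algebraMap (IsFractionRing.injective A E)
  have hmin : minpoly E (algebraMap B L θ) = (minpoly A θ).map (algebraMap A E) :=
    minpoly.isIntegrallyClosed_eq_field_fractions E L (Algebra.IsIntegral.isIntegral θ)
  have hder : aeval θ (derivative (minpoly A θ)) ≠ 0 := fun h0 => by
    refine (Algebra.IsSeparable.isSeparable E (algebraMap B L θ)).aeval_derivative_ne_zero
      (minpoly.aeval E (algebraMap B L θ)) ?_
    rw [hmin, derivative_map, aeval_map_algebraMap, aeval_algebraMap_apply, h0, map_zero]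
  obtain ⟨c, hc0, hc⟩ := (Algebra.IsAlgebraic.isAlgebraic (R := A)
    (aeval θ (derivative (minpoly A θ)))).exists_nonzero_dvd (mem_nonZeroDivisors_of_ne_zero hder)
  refine ⟨minpoly A θ, c, hc0, minpoly.aeval A θ, hc, fun b => ?_⟩
  obtain ⟨s, hs⟩ := hc
  rw [Algebra.smul_def, hs, mul_assoc]
  exact aeval_derivative_mul_mem_adjoin hgen (minpoly.aeval A θ) (s * b)

theorem exists_isSeparableGenerator (A B : Type*) [CommRing A] [IsDomain A] [CharZero A]
    [IsIntegrallyClosed A] [CommRing B] [IsDomain B] [Algebra A B] [FaithfulSMul A B]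
    [Module.Finite A B] : ∃ (θ : B) (F : A[X]) (c : A), IsSeparableGenerator θ F c := by
  let E := FractionRing A
  let L := FractionRing B
  let _ : Algebra E L := FractionRing.liftAlgebra A L
  have : IsScalarTower A E L := FractionRing.isScalarTower_liftAlgebra A L
  obtain ⟨t, ht⟩ := Field.exists_primitive_element E L
  obtain ⟨⟨θ, _, a, ha, rfl⟩, hθ⟩ := IsLocalization.surj (Algebra.algebraMapSubmonoid B A⁰) t
  have ha0 : algebraMap A E a ≠ 0 :=
    (map_ne_zero_iff _ (IsFractionRing.injective A E)).2 (nonZeroDivisors.ne_zero ha)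
  have htθ : t = (algebraMap A E a)⁻¹ • algebraMap B L θ := by
    rw [eq_inv_smul_iff₀ ha0, Algebra.smul_def, ← hθ, mul_comm, ← IsScalarTower.algebraMap_apply,
      ← IsScalarTower.algebraMap_apply]
  have hgen : Algebra.adjoin E {algebraMap B L θ} = ⊤ := by
    rw [← adjoin_simple_toSubalgebra_of_isAlgebraic (Algebra.IsAlgebraic.isAlgebraic _),
      ← top_toSubalgebra, ← ht]
    congr 1
    refine (ht ▸ le_top).antisymm (adjoin_simple_le_iff.2 ?_)
    rw [htθ]
    exact E⟮algebraMap B L θ⟯.smul_mem (mem_adjoin_simple_self E _)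
  exact ⟨θ, exists_isSeparableGenerator_of_adjoin_eq_top hgen⟩

end SeparableGenerator

section CharPEstimate

open MvPolynomial

theorem IsSeparableGenerator.frobeniusSum_injective {p : ℕ} [Fact p.Prime] {A B ι : Type*}
    [CommRing A] [IsDomain A] [CharP A p] [Algebra (ZMod p) A] [CommRing B] [IsDomain B] [CharP B p]
    [Algebra (ZMod p) B] [Algebra A B] [FaithfulSMul A B] [Fintype ι] {θ : B} {F : Polynomial A}
    {c : A} (hθ : IsSeparableGenerator θ F c) {u : ι → A}
    (hu : Function.Injective (frobeniusSum p u)) :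
    Function.Injective (frobeniusSum p (algebraMap A B ∘ u)) := by
  let E := FractionRing A
  let L := FractionRing B
  let _ : Algebra E L := FractionRing.liftAlgebra A L
  have : IsScalarTower A E L := FractionRing.isScalarTower_liftAlgebra A L
  have := hθ.finiteDimensional E L
  have := hθ.algebra_isSeparable E L
  have : CharP E p := charP_of_injective_algebraMap (IsFractionRing.injective A E) p
  have : CharP L p := charP_of_injective_algebraMap (IsFractionRing.injective B L) p
  refine frobeniusSum_injective_of_comp (IsFractionRing.injective B L) ?_
  rw [← Function.comp_assoc, ← RingHom.coe_comp, ← IsScalarTower.algebraMap_eq,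
    IsScalarTower.algebraMap_eq A E L, RingHom.coe_comp, Function.comp_assoc]
  exact frobeniusSum_injective_of_isSeparable (frobeniusSum_injective_of_isFractionRing hu)

theorem finrank_quotient_le_of_hasUnivariateRelations_comap {k σ B ι : Type*} [Field k]
    [Fintype σ] [CommRing B] [Algebra k B] [Algebra (MvPolynomial σ k) B]
    [IsScalarTower k (MvPolynomial σ k) B] [Fintype ι] {ω : ι → B}
    (hω : Submodule.span (MvPolynomial σ k) (Set.range ω) = ⊤) {K : Ideal B} {H m : ℕ}
    (hK : HasUnivariateRelations (K.comap (algebraMap (MvPolynomial σ k) B)) H)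
    {c : MvPolynomial σ k} (hc0 : c ≠ 0) (hcm : ∀ i, degreeOf i c ≤ m)
    (hc : algebraMap (MvPolynomial σ k) B c ∈ K) :
    Module.finrank k (B ⧸ K) ≤
      Fintype.card ι * (Fintype.card σ * m * H ^ (Fintype.card σ - 1)) := by
  have := hK.finite_quotient
  exact (finrank_quotient_le_card_mul_finrank_quotient_comap hω K).trans
    (Nat.mul_le_mul_left _ (hK.finrank_quotient_le hc0 hcm hc))

variable {p : ℕ} [Fact p.Prime] {σ B ι : Type*} [Fintype σ] [CommRing B] [IsDomain B] [CharP B p]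
  [Algebra (ZMod p) B] [Algebra (MvPolynomial σ (ZMod p)) B]
  [IsScalarTower (ZMod p) (MvPolynomial σ (ZMod p)) B] [FaithfulSMul (MvPolynomial σ (ZMod p)) B]
  [Fintype ι] {ω : ι → B} {J : Ideal B} {h m : ℕ} {θ : B}
  {F : Polynomial (MvPolynomial σ (ZMod p))} {c : MvPolynomial σ (ZMod p)}

/-- For `δ = F'(θ)`, the error terms of the two comparisons of colengths belong to ideals containing
`c ^ p` and `c`, respectively. -/
theorem IsSeparableGenerator.finrank_quotient_frobeniusPower_le
    (hθ : IsSeparableGenerator θ F c) (hcm : ∀ i, degreeOf i c ≤ m)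
    (hω : Submodule.span (MvPolynomial σ (ZMod p)) (Set.range ω) = ⊤)
    (hJ : HasUnivariateRelations (J.comap (algebraMap (MvPolynomial σ (ZMod p)) B)) h) (q : ℕ) :
    Module.finrank (ZMod p) (B ⧸ J.frobeniusPower (q * p)) ≤
        p ^ Fintype.card σ * Module.finrank (ZMod p) (B ⧸ J.frobeniusPower q) +
          Fintype.card ι * (Fintype.card σ * (p * m) * (h * (q * p)) ^ (Fintype.card σ - 1)) ∧
      p ^ Fintype.card σ * Module.finrank (ZMod p) (B ⧸ J.frobeniusPower q) ≤
        Module.finrank (ZMod p) (B ⧸ J.frobeniusPower (q * p)) + p ^ Fintype.card σ *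
          (Fintype.card ι * (Fintype.card σ * m * (h * q) ^ (Fintype.card σ - 1))) := by
  let A := MvPolynomial σ (ZMod p)
  have : Module.Finite A B := ⟨hω ▸ Submodule.fg_span (Set.finite_range ω)⟩
  have hinj := hθ.frobeniusSum_injective (p := p) (frobeniusSum_monomial_injective (σ := σ))
  have hδ (b : B) := mem_range_frobeniusSum_of_mem_adjoin
    (hθ.aeval_derivative_pow_mul_mem_adjoin p b)
  have hJq := hJ.comap_frobeniusPower q
  have hJqp := hJ.comap_frobeniusPower (q * p)
  have := hJqp.finite_quotient
  have := finite_quotient_of_finite_quotient_comap (A := A) (k := ZMod p)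
    (J.frobeniusPower (q * p))
  have hupper := finrank_quotient_frobeniusPower_mul_le (J := J) (q := q) hδ
  have hlower := card_mul_finrank_quotient_frobeniusPower_le (J := J) (q := q) hinj hδ
  rw [card_exponentBox] at hupper hlower
  constructor
  · refine hupper.trans (Nat.add_le_add_left (finrank_quotient_le_of_hasUnivariateRelations_comap
      hω (hJqp.mono (Ideal.comap_mono le_sup_right)) (pow_ne_zero p hθ.ne_zero)
      (fun i => (degreeOf_pow_le i c p).trans (Nat.mul_le_mul_left p (hcm i))) ?_) _)
    rw [map_pow]
    exact Ideal.mem_sup_left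
      (Ideal.mem_span_singleton.2 (pow_dvd_pow_of_dvd hθ.aeval_derivative_dvd p))
  · exact hlower.trans (Nat.add_le_add_left (Nat.mul_le_mul_left _
      (finrank_quotient_le_of_hasUnivariateRelations_comap hω
        (hJq.mono (Ideal.comap_mono le_sup_right)) hθ.ne_zero hcm
        (Ideal.mem_sup_left (Ideal.mem_span_singleton.2 hθ.aeval_derivative_dvd)))) _)

theorem IsSeparableGenerator.abs_finrank_quotient_frobeniusPower_sub_le
    (hθ : IsSeparableGenerator θ F c) (hcm : ∀ i, degreeOf i c ≤ m)
    (hω : Submodule.span (MvPolynomial σ (ZMod p)) (Set.range ω) = ⊤)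
    (hJ : HasUnivariateRelations (J.comap (algebraMap (MvPolynomial σ (ZMod p)) B)) h) (q : ℕ) :
    |(p : ℝ) ^ Fintype.card σ * Module.finrank (ZMod p) (B ⧸ J.frobeniusPower q) -
      Module.finrank (ZMod p) (B ⧸ J.frobeniusPower (q * p))| ≤
      (Fintype.card ι * Fintype.card σ * m * h ^ (Fintype.card σ - 1) : ℕ) *
        (p : ℝ) ^ Fintype.card σ * (q : ℝ) ^ (Fintype.card σ - 1) := by
  obtain ⟨hupper, hlower⟩ := hθ.finrank_quotient_frobeniusPower_le hcm hω hJ q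
  have hupper' := (Nat.cast_le (α := ℝ)).2 hupper
  have hlower' := (Nat.cast_le (α := ℝ)).2 hlower
  generalize Fintype.card σ = d at *
  push_cast at hupper' hlower' ⊢
  have hp : (d : ℝ) * (p * m) * (h * (q * p)) ^ (d - 1) =
      d * m * h ^ (d - 1) * p ^ d * q ^ (d - 1) := by
    rcases d with _ | k
    · simp
    · simp only [Nat.add_sub_cancel]; ring
  rw [hp] at hupper'
  rw [mul_pow] at hlower'
  exact abs_le.2 ⟨by linarith, by linarith⟩

end CharPEstimate

theorem ringKrullDim_eq_of_isIntegral {A B : Type*} [CommRing A] [CommRing B] [Algebra A B]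
    [FaithfulSMul A B] [Algebra.IsIntegral A B] : ringKrullDim B = ringKrullDim A := by
  refine le_antisymm ?_ (iSup_le fun l => ?_)
  · refine Order.krullDim_le_of_strictMono (PrimeSpectrum.comap (algebraMap A B)) fun P Q hPQ => ?_
    have hlt : P.asIdeal < Q.asIdeal := hPQ
    obtain ⟨x, hxQ, hxP⟩ := SetLike.exists_of_lt hlt
    exact Ideal.comap_lt_comap_of_integral_mem_sdiff hlt.le ⟨hxQ, hxP⟩
      (Algebra.IsIntegral.isIntegral x)
  · obtain ⟨Q, -, hQ, hQl⟩ := Ideal.exists_ideal_over_prime_of_isIntegral (S := B)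
      (RelSeries.head l).asIdeal ⊥ (by
        rw [Ideal.comap_bot_of_injective _ (FaithfulSMul.algebraMap_injective A B)]
        exact bot_le)
    have : Q.LiesOver (RelSeries.head l).asIdeal := ⟨hQl.symm⟩
    obtain ⟨L, hL, -⟩ := Ideal.exists_ltSeries_of_hasGoingUp l Q
    rw [← hL]
    exact le_iSup (fun L : LTSeries (PrimeSpectrum B) => ((L.length : ℕ) : WithBot ℕ∞)) L

section Chevalley

open PrimeSpectrum

variable {A : Type*} [CommRing A] [IsDomain A]

theorem exists_basicOpen_subset_of_isConstructible {T : Set (PrimeSpectrum A)}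
    (hT : Topology.IsConstructible T) (hbot : ⊥ ∈ T) : ∃ f : A, f ≠ 0 ∧ ↑(basicOpen f) ⊆ T := by
  obtain ⟨D, rfl⟩ := exists_constructibleSetData_iff.2 hT
  obtain ⟨C, hC, hCg, hCf⟩ := Set.mem_iUnion₂.1 hbot
  have hg (i) : C.g i = 0 := hCg ⟨i, rfl⟩
  refine ⟨C.f, fun h => hCf (by simp [h]), fun P hP => Set.mem_iUnion₂.2 ⟨C, hC, ?_, ?_⟩⟩
  · rintro _ ⟨i, rfl⟩
    rw [hg]
    exact zero_mem _
  · exact fun h => hP (h rfl)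

theorem exists_basicOpen_subset_range_comap [IsNoetherianRing A] {S : Type*} [CommRing S]
    {φ : A →+* S} (hφ : Function.Injective φ) (hft : φ.FiniteType) :
    ∃ f : A, f ≠ 0 ∧ ↑(basicOpen f) ⊆ Set.range (comap φ) := by
  refine exists_basicOpen_subset_of_isConstructible
    (isConstructible_range_comap (RingHom.FinitePresentation.of_finiteType.1 hft)) ?_
  obtain ⟨Q, hQ, hQbot⟩ := Ideal.exists_comap_eq_of_mem_minimalPrimes_of_injective hφ (⊥ : Ideal A)
    (by rw [IsDomain.minimalPrimes_eq_singleton_bot]; rfl)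
  exact ⟨⟨Q, hQ⟩, PrimeSpectrum.ext hQbot⟩

end Chevalley

section AlmostAllPrimes

open Filter

/-- The filter of sets of natural numbers containing all sufficiently large primes, so that
`∀ᶠ p in almostAllPrimes` says "for almost all primes `p`". -/
def almostAllPrimes : Filter ℕ := atTop ⊓ 𝓟 {p | p.Prime}

instance : almostAllPrimes.NeBot :=
  frequently_mem_iff_neBot.1 (Nat.frequently_atTop_iff_infinite.2 Nat.infinite_setOfPred_prime)

theorem eventually_almostAllPrimes_iff {P : ℕ → Prop} :
    (∀ᶠ p in almostAllPrimes, P p) ↔ ∃ N, ∀ p, p.Prime → N ≤ p → P p := by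
  simp only [almostAllPrimes, eventually_inf_principal, eventually_atTop, Set.mem_ofPred_eq]
  exact exists_congr fun N => ⟨fun h p hp hN => h p hN hp, fun h p hN hp => h p hp hN⟩

theorem eventually_prime : ∀ᶠ p in almostAllPrimes, p.Prime :=
  mem_inf_of_right (mem_principal_self _)

theorem eventually_intCast_zmod_ne_zero {a : ℤ} (ha : a ≠ 0) :
    ∀ᶠ p in almostAllPrimes, (a : ZMod p) ≠ 0 := by
  refine eventually_almostAllPrimes_iff.2 ⟨a.natAbs + 1, fun p _ hp h => ha ?_⟩
  exact Int.eq_zero_of_dvd_of_natAbs_lt_natAbs ((ZMod.intCast_zmod_eq_zero_iff_dvd a p).1 h)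
    (by simpa using hp)

theorem eventually_map_castRingHom_ne_zero {σ : Type*} {g : MvPolynomial σ ℤ} (hg : g ≠ 0) :
    ∀ᶠ p in almostAllPrimes, g.map (Int.castRingHom (ZMod p)) ≠ 0 := by
  obtain ⟨a, ha⟩ := MvPolynomial.ne_zero_iff.1 hg
  filter_upwards [eventually_intCast_zmod_ne_zero ha] with p hp h
  refine hp ?_
  rw [← eq_intCast (Int.castRingHom (ZMod p)), ← MvPolynomial.coeff_map, h, MvPolynomial.coeff_zero]

theorem eventually_polynomial_map_castRingHom_ne_zero {g : Polynomial ℤ} (hg : g ≠ 0) :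
    ∀ᶠ p in almostAllPrimes, g.map (Int.castRingHom (ZMod p)) ≠ 0 := by
  filter_upwards [eventually_intCast_zmod_ne_zero (Polynomial.leadingCoeff_ne_zero.2 hg)]
    with p hp h
  refine hp ?_
  rw [← Polynomial.coeff_natDegree, ← eq_intCast (Int.castRingHom (ZMod p)), ← Polynomial.coeff_map,
    h, Polynomial.coeff_zero]

theorem aeval_map_castRingHom {σ S B : Type*} [CommRing S] [CommRing B] {p : ℕ} [Algebra (ZMod p) B]
    (π : S →+* B) (x : σ → S) (g : MvPolynomial σ ℤ) :
    MvPolynomial.aeval (π ∘ x) (g.map (Int.castRingHom (ZMod p))) =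
      π (MvPolynomial.aeval x g) := by
  rw [MvPolynomial.aeval_def, MvPolynomial.eval₂_map, MvPolynomial.aeval_def,
    MvPolynomial.hom_eval₂]
  exact congrArg (MvPolynomial.eval₂ · (π ∘ x) g) (RingHom.ext_int _ _)

/-- By Chevalley's theorem, the image of `Spec S` in the affine space over `ℤ` with coordinates `x`
contains the generic points of almost all fibers. -/
theorem eventually_algebraicIndependent_mk {σ S : Type*} [Finite σ] [CommRing S]
    [Algebra.FiniteType ℤ S] {x : σ → S} (hx : AlgebraicIndependent ℤ x) :
    ∀ᶠ p in almostAllPrimes, ∀ [Algebra (ZMod p) (modPFiber S p)],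
      AlgebraicIndependent (ZMod p) (Ideal.Quotient.mk (Ideal.span {(p : S)}) ∘ x) := by
  let φ : MvPolynomial σ ℤ →+* S := (MvPolynomial.aeval x).toRingHom
  have hft : φ.FiniteType := by
    refine RingHom.FiniteType.of_comp_finiteType (f := algebraMap ℤ (MvPolynomial σ ℤ)) ?_
    rw [RingHom.ext_int (φ.comp _) (algebraMap ℤ S)]
    exact RingHom.finiteType_algebraMap.2 inferInstance
  obtain ⟨f, hf0, hf⟩ := exists_basicOpen_subset_range_comap (φ := φ) hx hft
  filter_upwards [eventually_prime, eventually_map_castRingHom_ne_zero hf0] with p hp hfp _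
  have : Fact p.Prime := ⟨hp⟩
  let ρ : MvPolynomial σ ℤ →+* MvPolynomial σ (ZMod p) := MvPolynomial.map (Int.castRingHom _)
  obtain ⟨Q, hQ⟩ := hf (a := ⟨RingHom.ker ρ, RingHom.ker_isPrime ρ⟩) hfp
  have hQ (a : MvPolynomial σ ℤ) : MvPolynomial.aeval x a ∈ Q.asIdeal ↔ ρ a = 0 :=
    SetLike.ext_iff.1 (congrArg PrimeSpectrum.asIdeal hQ) a
  have hpQ : Ideal.span {(p : S)} ≤ Q.asIdeal := by
    rw [Ideal.span_singleton_le_iff_mem, ← map_natCast (MvPolynomial.aeval x : _ →ₐ[ℤ] S), hQ]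
    simp
  refine algebraicIndependent_iff.2 fun g hg => ?_
  obtain ⟨a, rfl⟩ := MvPolynomial.map_surjective (Int.castRingHom (ZMod p))
    (ZMod.ringHom_surjective _) g
  rw [aeval_map_castRingHom] at hg
  exact (hQ a).1 (hpQ (Ideal.Quotient.eq_zero_iff_mem.1 hg))

/-- A transcendental element of `S` would remain transcendental in some finite fiber. -/
theorem isAlgebraic_int_of_eventually_finite {S : Type*} [CommRing S] [Algebra.FiniteType ℤ S]
    (hS : ∀ᶠ p in almostAllPrimes, Finite (modPFiber S p)) : Algebra.IsAlgebraic ℤ S := by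
  refine ⟨fun t => of_not_not fun ht => ?_⟩
  have ht' : AlgebraicIndependent ℤ fun _ : Unit => t :=
    (algebraicIndependent_unique_type_iff).2 ht
  obtain ⟨p, hp, hfin, hind⟩ :=
    (eventually_prime.and (hS.and (eventually_algebraicIndependent_mk ht'))).exists
  have : Fact p.Prime := ⟨hp⟩
  let _ : Module (ZMod p) (modPFiber S p) := AddCommGroup.zmodModule fun b => by
    obtain ⟨s, rfl⟩ := Ideal.Quotient.mk_surjective b
    rw [← map_nsmul, Ideal.Quotient.eq_zero_iff_mem, nsmul_eq_mul]
    exact Ideal.mul_mem_right _ _ (Ideal.mem_span_singleton_self _)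
  let _ : Algebra (ZMod p) (modPFiber S p) := ZMod.algebraOfModule p _
  exact not_finite_iff_infinite.2 (Infinite.of_injective _ hind) hfin

end AlmostAllPrimes

section NoetherNormalization

open MvPolynomial nonZeroDivisors TensorProduct

theorem exists_finite_subalgebra_of_exists_isIntegral_smul {A R : Type*} [CommRing A] [CommRing R]
    [Algebra A R] [Algebra.FiniteType A R] {M : Submonoid A}
    (hM : ∀ r : R, ∃ a ∈ M, IsIntegral A (a • r)) :
    ∃ R' : Subalgebra A R, Module.Finite A R' ∧ ∃ a ∈ M, ∀ r : R, ∃ k, a ^ k • r ∈ R' := by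
  obtain ⟨G, hG⟩ := Algebra.FiniteType.out (R := A) (A := R)
  choose n hnM hn using hM
  let a : A := ∏ t ∈ G, n t
  refine ⟨Algebra.adjoin A ((a • ·) '' (G : Set R)), ?_, a, M.prod_mem fun t _ => hnM t,
    fun r => ?_⟩
  · refine Algebra.finite_adjoin_of_finite_of_isIntegral (G.finite_toSet.image _) ?_
    rintro _ ⟨t, ht, rfl⟩
    obtain ⟨b, hb⟩ : n t ∣ a := Finset.dvd_prod_of_mem n ht
    simp only [hb, mul_comm, mul_smul]
    exact (hn t).smul b
  · obtain ⟨k, hk⟩ := Algebra.pow_smul_mem_of_smul_subset_of_mem_adjoin (R := A) a (G : Set R)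
      (Algebra.adjoin A ((a • ·) '' (G : Set R))) Algebra.subset_adjoin (hG ▸ Algebra.mem_top)
      (Subalgebra.algebraMap_mem _ a)
    exact ⟨k, hk k le_rfl⟩

/-- The linear change of coordinates multiplying the variables by units. -/
noncomputable def scaleVariables {K σ : Type*} [CommRing K] (a : σ → Kˣ) :
    MvPolynomial σ K ≃ₐ[K] MvPolynomial σ K :=
  AlgEquiv.ofAlgHom (aeval fun i => (a i : K) • X i) (aeval fun i => (↑(a i)⁻¹ : K) • X i)
    (by ext i : 1; simp [smul_smul]) (by ext i : 1; simp [smul_smul])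

theorem exists_algebraicIndependent_isIntegral_of_exists_smul_mem (K : Type*) {S : Type*} [Field K]
    [CommRing S] [Nontrivial S] [Algebra K S] [Algebra.FiniteType K S] {T : Set S}
    (hT : ∀ z : S, ∃ a : Kˣ, (a : K) • z ∈ T) :
    ∃ (s : ℕ) (x : Fin s → S), (∀ i, x i ∈ T) ∧ AlgebraicIndependent K x ∧
      (aeval x : MvPolynomial (Fin s) K →ₐ[K] S).IsIntegral := by
  obtain ⟨s, g, hginj, hgint⟩ := exists_integral_inj_algHom_of_fg K S
  choose a ha using fun i : Fin s => hT (g (X i))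
  have hx : aeval (fun i => (a i : K) • g (X i)) = g.comp (scaleVariables a).toAlgHom := by
    ext i : 1
    simp [scaleVariables]
  refine ⟨s, fun i => (a i : K) • g (X i), ha, ?_, ?_⟩
  · rw [AlgebraicIndependent, hx]
    exact hginj.comp (scaleVariables a).injective
  · rw [hx]
    exact (RingHom.isIntegral_of_surjective _ (scaleVariables a).surjective).trans _ _ hgint

section

variable {O R : Type*} [CommRing O] [CommRing R] [Algebra O R] {K S : Type*} [Field K] [Algebra O K]
  [CommRing S] [Algebra K S] [Algebra O S] [IsScalarTower O K S] [Algebra R S] [IsScalarTower O R S]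

theorem exists_units_smul_mem_range_algebraMap [IsFractionRing O K]
    [IsLocalization (Algebra.algebraMapSubmonoid R O⁰) S] (z : S) :
    ∃ a : Kˣ, (a : K) • z ∈ Set.range (algebraMap R S) := by
  obtain ⟨⟨r, _, n, hn, rfl⟩, hr⟩ := IsLocalization.surj (Algebra.algebraMapSubmonoid R O⁰) z
  refine ⟨(IsLocalization.map_units K ⟨n, hn⟩).unit, r, ?_⟩
  rw [← hr, IsUnit.unit_spec, algebraMap_smul, Algebra.smul_def, mul_comm,
    ← IsScalarTower.algebraMap_apply]

attribute [local instance] algebraMvPolynomial in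
theorem exists_isIntegralElem_smul_of_isIntegral_aeval [IsDomain O] [IsFractionRing O K]
    (hRS : Function.Injective (algebraMap R S)) {σ : Type*} {x : σ → R}
    (hx : (aeval (algebraMap R S ∘ x) : MvPolynomial σ K →ₐ[K] S).IsIntegral) (r : R) :
    ∃ n : O, n ≠ 0 ∧ (aeval x : MvPolynomial σ O →ₐ[O] R).IsIntegralElem (n • r) := by
  algebraize [(aeval x : MvPolynomial σ O →ₐ[O] R).toRingHom,
    (aeval (algebraMap R S ∘ x) : MvPolynomial σ K →ₐ[K] S).toRingHom,
    (algebraMap R S).comp (aeval x : MvPolynomial σ O →ₐ[O] R).toRingHom]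
  have : IsScalarTower (MvPolynomial σ O) (MvPolynomial σ K) S := .of_algebraMap_eq' <| by
    refine MvPolynomial.ringHom_ext (fun a => ?_) fun i => ?_
    · simp [RingHom.algebraMap_toAlgebra, ← IsScalarTower.algebraMap_apply]
    · simp [RingHom.algebraMap_toAlgebra]
  obtain ⟨⟨_, n, hn, rfl⟩, hm⟩ := IsIntegral.exists_multiple_integral_of_isLocalization
    (O⁰.map (C : O →+* MvPolynomial σ O)) (algebraMap R S r) (hx (algebraMap R S r))
  refine ⟨n, nonZeroDivisors.ne_zero hn, ?_⟩
  have hr := (isIntegral_algHom_iff (x := (C n : MvPolynomial σ O) • r)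
    (IsScalarTower.toAlgHom (MvPolynomial σ O) R S) hRS).1 (by rwa [map_smul])
  rwa [Algebra.smul_def, RingHom.algebraMap_toAlgebra, AlgHom.toRingHom_eq_coe, RingHom.coe_coe,
    aeval_C, ← Algebra.smul_def] at hr

end

attribute [local instance] Algebra.TensorProduct.rightAlgebra in
theorem exists_algebraicIndependent_isIntegral_smul (O R : Type*) [CommRing O] [IsDomain O]
    [CommRing R] [IsDomain R] [Algebra O R] [FaithfulSMul O R] [Algebra.FiniteType O R] :
    ∃ (s : ℕ) (x : Fin s → R), AlgebraicIndependent O x ∧ ∀ r : R, ∃ n : O, n ≠ 0 ∧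
      (aeval x : MvPolynomial (Fin s) O →ₐ[O] R).IsIntegralElem (n • r) := by
  let K := FractionRing O
  let S := K ⊗[O] R
  have hRS : Function.Injective (algebraMap R S) := IsLocalization.injective S
    (algebraMapSubmonoid_le_nonZeroDivisors_of_faithfulSMul (A := O) R le_rfl)
  have := hRS.nontrivial
  obtain ⟨s, x, hxR, hxind, hxint⟩ := exists_algebraicIndependent_isIntegral_of_exists_smul_mem K
    (exists_units_smul_mem_range_algebraMap (O := O) (R := R) (K := K) (S := S))
  choose x' hx' using hxR
  obtain rfl : algebraMap R S ∘ x' = x := funext hx'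
  refine ⟨s, x', .of_comp (IsScalarTower.toAlgHom O R S) (hxind.restrictScalars ?_),
    exists_isIntegralElem_smul_of_isIntegral_aeval hRS hxint⟩
  exact IsFractionRing.injective O K

theorem exists_algebra_mvPolynomial_finite_subalgebra (O R : Type*) [CommRing O] [IsDomain O]
    [CommRing R] [IsDomain R] [Algebra O R] [FaithfulSMul O R] [Algebra.FiniteType O R] :
    ∃ (s : ℕ) (_ : Algebra (MvPolynomial (Fin s) O) R) (R' : Subalgebra (MvPolynomial (Fin s) O) R)
      (n : O), IsScalarTower O (MvPolynomial (Fin s) O) R ∧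
        FaithfulSMul (MvPolynomial (Fin s) O) R ∧ Module.Finite (MvPolynomial (Fin s) O) R' ∧
        n ≠ 0 ∧ ∀ r : R, ∃ k, n ^ k • r ∈ R' := by
  obtain ⟨s, x, hx, hint⟩ := exists_algebraicIndependent_isIntegral_smul O R
  algebraize [(aeval x : MvPolynomial (Fin s) O →ₐ[O] R).toRingHom]
  have htower : IsScalarTower O (MvPolynomial (Fin s) O) R :=
    .of_algebraMap_eq' (aeval x : MvPolynomial (Fin s) O →ₐ[O] R).comp_algebraMap.symm
  have hfaith : FaithfulSMul (MvPolynomial (Fin s) O) R :=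
    (faithfulSMul_iff_algebraMap_injective _ _).2 hx
  have := Algebra.FiniteType.of_restrictScalars_finiteType O (MvPolynomial (Fin s) O) R
  obtain ⟨R', hfin, _, ⟨n, hn, rfl⟩, hR'⟩ := exists_finite_subalgebra_of_exists_isIntegral_smul
    (A := MvPolynomial (Fin s) O) (R := R) (M := O⁰.map C) fun r => by
      obtain ⟨n, hn, hr⟩ := hint r
      refine ⟨C n, ⟨n, mem_nonZeroDivisors_of_ne_zero hn, rfl⟩, ?_⟩
      rwa [← algebraMap_eq, algebraMap_smul]
  refine ⟨s, _, R', n, htower, hfaith, hfin, nonZeroDivisors.ne_zero hn, fun r => ?_⟩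
  obtain ⟨k, hk⟩ := hR' r
  refine ⟨k, ?_⟩
  rwa [← map_pow, ← algebraMap_eq, algebraMap_smul] at hk

end NoetherNormalization

section Fibers

open MvPolynomial Filter

variable {σ : Type*}

theorem eventually_hasUnivariateRelations_map [Finite σ] {𝔞 : Ideal (MvPolynomial σ ℤ)} {h : ℕ}
    (h𝔞 : HasUnivariateRelations 𝔞 h) : ∀ᶠ p in almostAllPrimes,
      HasUnivariateRelations (𝔞.map (MvPolynomial.map (Int.castRingHom (ZMod p)))) h := by
  choose g hg0 hgh hg using h𝔞
  filter_upwards [eventually_all.2 fun i => eventually_polynomial_map_castRingHom_ne_zero (hg0 i)]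
    with p hp i
  refine ⟨(g i).map (Int.castRingHom (ZMod p)), hp i, Polynomial.natDegree_map_le.trans (hgh i), ?_⟩
  have hmap := Polynomial.map_aeval_eq_aeval_map (S := MvPolynomial σ ℤ)
    (φ := Int.castRingHom (ZMod p)) (ψ := MvPolynomial.map (σ := σ) (Int.castRingHom (ZMod p)))
    (RingHom.ext_int _ _) (g i) (X i)
  rw [map_X] at hmap
  exact hmap ▸ Ideal.mem_map_of_mem _ (hg i)

theorem mk_comp_subtype_surjective {R S : Type*} [CommRing R] [SetLike S R] [SubringClass S R]
    {R' : S} {n : ℤ} {m : ℕ} (hnm : IsCoprime n m) (hR' : ∀ r : R, ∃ k, n ^ k • r ∈ R') :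
    Function.Surjective
      ((Ideal.Quotient.mk (Ideal.span {(m : R)})).comp (SubringClass.subtype R')) := by
  intro b
  obtain ⟨r, rfl⟩ := Ideal.Quotient.mk_surjective b
  obtain ⟨k, hk⟩ := hR' r
  obtain ⟨u, v, huv⟩ := hnm.pow_left (m := k)
  refine ⟨⟨u • n ^ k • r, zsmul_mem hk u⟩, (Ideal.Quotient.mk_eq_mk_iff_sub_mem _ _).2 ?_⟩
  refine Ideal.mem_span_singleton.2 ⟨-(v • r), ?_⟩
  have huv' := congrArg (Int.cast : ℤ → R) huv
  push_cast at huv'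
  simp only [SubringClass.coe_subtype, zsmul_eq_mul, Int.cast_pow]
  linear_combination r * huv'

theorem eventually_mk_comp_subtype_surjective {R S : Type*} [CommRing R] [SetLike S R]
    [SubringClass S R] {R' : S} {n : ℤ} (hn : n ≠ 0) (hR' : ∀ r : R, ∃ k, n ^ k • r ∈ R') :
    ∀ᶠ p in almostAllPrimes, Function.Surjective
      ((Ideal.Quotient.mk (Ideal.span {((p : ℕ) : R)})).comp (SubringClass.subtype R')) := by
  filter_upwards [eventually_prime, eventually_intCast_zmod_ne_zero hn] with p hp hnp
  have hcop : IsCoprime n p := ((Nat.prime_iff_prime_int.1 hp).coprime_iff_not_dvd.2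
    (mt (ZMod.intCast_zmod_eq_zero_iff_dvd n p).2 hnp)).symm
  exact mk_comp_subtype_surjective hcop hR'

section Reduction

variable {A B A' B' : Type*} [CommRing A] [CommRing B] [CommRing A'] [CommRing B'] [Algebra A B]
  [Algebra A' B'] {ρ : A →+* A'} {π : B →+* B'}

theorem span_range_comp_eq_top (hπ : Function.Surjective π)
    (hρπ : (algebraMap A' B').comp ρ = π.comp (algebraMap A B)) {ι : Type*} {ω : ι → B}
    (hω : Submodule.span A (Set.range ω) = ⊤) : Submodule.span A' (Set.range (π ∘ ω)) = ⊤ := by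
  refine Submodule.eq_top_iff'.2 fun b' => ?_
  obtain ⟨b, rfl⟩ := hπ b'
  have hb : b ∈ Submodule.span A (Set.range ω) := hω ▸ Submodule.mem_top
  induction hb using Submodule.span_induction with
  | mem _ hx =>
    obtain ⟨i, rfl⟩ := hx
    exact Submodule.subset_span ⟨i, rfl⟩
  | zero => exact map_zero π ▸ zero_mem _
  | add x y _ _ hx hy => exact map_add π x y ▸ add_mem hx hy
  | smul a x _ hx =>
    rw [Algebra.smul_def, map_mul, ← RingHom.comp_apply, ← hρπ, RingHom.comp_apply,
      ← Algebra.smul_def]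
    exact Submodule.smul_mem _ _ hx

theorem map_comap_algebraMap_le (hρπ : (algebraMap A' B').comp ρ = π.comp (algebraMap A B))
    (I : Ideal B) : (I.comap (algebraMap A B)).map ρ ≤ (I.map π).comap (algebraMap A' B') := by
  rw [Ideal.map_le_iff_le_comap, Ideal.comap_comap, hρπ, ← Ideal.comap_comap]
  exact Ideal.comap_mono Ideal.le_comap_map

end Reduction

theorem isIntegral_of_span_range_eq_top {A B ι : Type*} [CommRing A] [CommRing B] [Algebra A B]
    [Finite ι] {ω : ι → B} (hω : Submodule.span A (Set.range ω) = ⊤) : Algebra.IsIntegral A B :=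
  have : Module.Finite A B := ⟨hω ▸ Submodule.fg_span (Set.finite_range ω)⟩
  inferInstance

variable {R : Type*} [CommRing R] [Algebra.FiniteType ℤ R]
  [Algebra (MvPolynomial σ ℤ) R] [FaithfulSMul (MvPolynomial σ ℤ) R]

variable (σ R) in
theorem eventually_exists_algebra_modPFiber [Finite σ] :
    ∀ᶠ p in almostAllPrimes, ∀ [Algebra (ZMod p) (modPFiber R p)],
      ∃ _ : Algebra (MvPolynomial σ (ZMod p)) (modPFiber R p),
        IsScalarTower (ZMod p) (MvPolynomial σ (ZMod p)) (modPFiber R p) ∧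
        FaithfulSMul (MvPolynomial σ (ZMod p)) (modPFiber R p) ∧
        (algebraMap (MvPolynomial σ (ZMod p)) (modPFiber R p)).comp
          (MvPolynomial.map (Int.castRingHom (ZMod p))) =
          (Ideal.Quotient.mk _).comp (algebraMap (MvPolynomial σ ℤ) R) := by
  have hind : AlgebraicIndependent ℤ fun i => algebraMap (MvPolynomial σ ℤ) R (X i) :=
    (algebraicIndependent_X σ ℤ).map' (f := IsScalarTower.toAlgHom ℤ (MvPolynomial σ ℤ) R)
      (FaithfulSMul.algebraMap_injective _ _)
  filter_upwards [eventually_algebraicIndependent_mk hind] with p hp _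
  let x (i : σ) : modPFiber R p := Ideal.Quotient.mk _ (algebraMap (MvPolynomial σ ℤ) R (X i))
  algebraize [(aeval x : MvPolynomial σ (ZMod p) →ₐ[ZMod p] modPFiber R p).toRingHom]
  refine ⟨inferInstance,
    .of_algebraMap_eq' (aeval x : _ →ₐ[ZMod p] modPFiber R p).comp_algebraMap.symm,
    (faithfulSMul_iff_algebraMap_injective _ _).2 hp, ?_⟩
  exact MvPolynomial.ringHom_ext' (RingHom.ext_int _ _) fun i => by
    simp [RingHom.algebraMap_toAlgebra, x]

theorem eventually_ringKrullDim_and_abs_fiberColength_sub_le [Fintype σ]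
    {R' : Subalgebra (MvPolynomial σ ℤ) R} [Module.Finite (MvPolynomial σ ℤ) R'] {n : ℤ}
    (hn : n ≠ 0) (hR' : ∀ r : R, ∃ k, n ^ k • r ∈ R') {θ : R'} {F : Polynomial (MvPolynomial σ ℤ)}
    {c : MvPolynomial σ ℤ} (hθ : IsSeparableGenerator θ F c) {I : Ideal R} {h : ℕ}
    (hI : HasUnivariateRelations (I.comap (algebraMap (MvPolynomial σ ℤ) R)) h) :
    ∃ K : ℕ, ∀ᶠ p in almostAllPrimes, ∀ [CharP (modPFiber R p) p] [IsDomain (modPFiber R p)],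
      ringKrullDim (modPFiber R p) = Fintype.card σ ∧ ∀ q : ℕ,
        |(p : ℝ) ^ Fintype.card σ * fiberColength p ((modPFiberIdeal I p).frobeniusPower q) -
          fiberColength p ((modPFiberIdeal I p).frobeniusPower (q * p))| ≤
        (Fintype.card σ * K : ℕ) * (p : ℝ) ^ Fintype.card σ * (q : ℝ) ^ (Fintype.card σ - 1) := by
  classical
  obtain ⟨e, ω, hω⟩ := Module.Finite.exists_fin (R := MvPolynomial σ ℤ) (M := R')
  let m := Finset.univ.sup fun i => degreeOf i c
  refine ⟨e * m * h ^ (Fintype.card σ - 1), ?_⟩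
  filter_upwards [eventually_prime, eventually_mk_comp_subtype_surjective hn hR',
    eventually_exists_algebra_modPFiber σ R, eventually_map_castRingHom_ne_zero hθ.ne_zero,
    eventually_hasUnivariateRelations_map hI] with p hp hπ hA hcp hIp _ _
  have : Fact p.Prime := ⟨hp⟩
  let _ : Algebra (ZMod p) (modPFiber R p) := ZMod.algebra _ p
  obtain ⟨_, _, _, hρπ⟩ := hA
  have hωp := span_range_comp_eq_top hπ hρπ hω
  refine ⟨?_, fun q => ?_⟩
  · have := isIntegral_of_span_range_eq_top hωp
    rw [ringKrullDim_eq_of_isIntegral (A := MvPolynomial σ (ZMod p)),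
      MvPolynomial.ringKrullDim_of_isNoetherianRing, ringKrullDim_eq_zero_of_field, zero_add,
      Nat.card_eq_fintype_card]
  · have hcm (i : σ) : degreeOf i (c.map (Int.castRingHom (ZMod p))) ≤ m :=
      (Multiset.count_le_of_le i degrees_map_le).trans
        (Finset.le_sup (f := fun i => degreeOf i c) (Finset.mem_univ i))
    have hest := (hθ.map hπ hρπ hcp).abs_finrank_quotient_frobeniusPower_sub_le hcm hωp
      (hIp.mono (map_comap_algebraMap_le hρπ I)) q
    rwa [Fintype.card_fin, mul_comm e, mul_assoc (_ * e), mul_assoc _ e, ← mul_assoc e] at hest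

end Fibers

section FiberColength

open MvPolynomial Filter

theorem abs_div_pow_sub_div_mul_pow_le {P Q K a b : ℝ} {d : ℕ} (hP : 0 < P) (hQ : 0 < Q)
    (h : |P ^ d * a - b| ≤ d * K * P ^ d * Q ^ (d - 1)) :
    |a / Q ^ d - b / (Q * P) ^ d| ≤ d * K / Q := by
  have hd : (d : ℝ) * Q ^ (d - 1) * Q = d * Q ^ d := by
    rcases d with _ | d
    · simp
    · rw [Nat.add_sub_cancel, pow_succ, mul_assoc]
  have hab : a / Q ^ d - b / (Q * P) ^ d = (P ^ d * a - b) / (Q * P) ^ d := by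
    rw [mul_pow]
    field_simp
  rw [hab, abs_div, abs_of_pos (pow_pos (mul_pos hQ hP) d), div_le_div_iff₀ (by positivity) hQ]
  calc |P ^ d * a - b| * Q ≤ d * K * P ^ d * Q ^ (d - 1) * Q := by gcongr
    _ = K * P ^ d * (d * Q ^ (d - 1) * Q) := by ring
    _ = d * K * (Q * P) ^ d := by rw [hd]; ring

theorem finite_modPFiber_quotient {R : Type*} [CommRing R] {I : Ideal R} {p : ℕ}
    (h : Finite (modPFiber R p ⧸ modPFiberIdeal I p)) : Finite (modPFiber (R ⧸ I) p) := by
  have hp : (Ideal.span {(p : R)}).map (Ideal.Quotient.mk I) = Ideal.span {(p : R ⧸ I)} := by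
    rw [Ideal.map_span, Set.image_singleton, map_natCast]
  have : Finite (modPFiber R p ⧸ I.map (Ideal.Quotient.mk (Ideal.span {(p : R)}))) := h
  exact .of_equiv _ ((DoubleQuot.quotQuotEquivComm (Ideal.span {(p : R)}) I).trans
    (Ideal.quotEquivOfEq hp)).toEquiv

theorem exists_hasUnivariateRelations_comap_of_eventually_finite {σ R : Type*} [Finite σ]
    [CommRing R] [Algebra.FiniteType ℤ R] [Algebra (MvPolynomial σ ℤ) R] {I : Ideal R}
    (hI : ∀ᶠ p in almostAllPrimes, Finite (modPFiber R p ⧸ modPFiberIdeal I p)) :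
    ∃ h, HasUnivariateRelations (I.comap (algebraMap (MvPolynomial σ ℤ) R)) h := by
  have := Algebra.FiniteType.of_surjective (Ideal.Quotient.mk I).toIntAlgHom
    Ideal.Quotient.mk_surjective
  have halg := isAlgebraic_int_of_eventually_finite (hI.mono fun p => finite_modPFiber_quotient)
  let φ : MvPolynomial σ ℤ →ₐ[ℤ] R ⧸ I :=
    ((Ideal.Quotient.mk I).comp (algebraMap (MvPolynomial σ ℤ) R)).toIntAlgHom
  refine exists_hasUnivariateRelations fun i => ?_
  obtain ⟨g, hg0, hg⟩ := halg.isAlgebraic (φ (X i))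
  rw [Polynomial.aeval_algHom_apply] at hg
  exact ⟨g, hg0, Ideal.mem_comap.2 (Ideal.Quotient.eq_zero_iff_mem.1 hg)⟩

theorem fiber_colength_frobeniusPower_succ_diff_le_general {R : Type*} [CommRing R] [IsDomain R]
    [CharZero R] [Algebra.FiniteType ℤ R] (I : Ideal R) (d : ℕ)
    (hdom : ∀ᶠ p in almostAllPrimes, IsDomain (modPFiber R p))
    (hdim : ∀ᶠ p in almostAllPrimes, ringKrullDim (modPFiber R p) = d)
    (hfin : ∀ᶠ p in almostAllPrimes, Finite (modPFiber R p ⧸ modPFiberIdeal I p)) :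
    ∃ C : ℝ, 0 < C ∧ ∀ᶠ p in almostAllPrimes, ∀ [CharP (modPFiber R p) p], ∀ n : ℕ,
      |(fiberColength p ((modPFiberIdeal I p).frobeniusPower (p ^ n)) : ℝ) / (p : ℝ) ^ (n * d) -
        (fiberColength p ((modPFiberIdeal I p).frobeniusPower (p ^ (n + 1))) : ℝ) /
          (p : ℝ) ^ ((n + 1) * d)| ≤ C / (p : ℝ) ^ n := by
  obtain ⟨s, _, R', N, _, _, _, hN, hR'⟩ := exists_algebra_mvPolynomial_finite_subalgebra ℤ R
  obtain ⟨θ, F, c, hθ⟩ := exists_isSeparableGenerator (MvPolynomial (Fin s) ℤ) R'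
  obtain ⟨h, hI⟩ := exists_hasUnivariateRelations_comap_of_eventually_finite (σ := Fin s) hfin
  obtain ⟨K, hK⟩ := eventually_ringKrullDim_and_abs_fiberColength_sub_le hN hR' hθ hI
  refine ⟨d * K + 1, by positivity, ?_⟩
  filter_upwards [eventually_prime, hdom, hdim, hK] with p hp _ hdp hKp _ n
  obtain ⟨hsp, hest⟩ := hKp
  obtain rfl : s = d := by rw [hdp, Fintype.card_fin] at hsp; exact_mod_cast hsp.symm
  have hp0 : (0 : ℝ) < p := mod_cast hp.pos
  have hestn := hest (p ^ n)
  rw [Fintype.card_fin, ← pow_succ] at hestn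
  push_cast at hestn
  rw [pow_mul, pow_mul, pow_succ (p : ℝ) n]
  refine (abs_div_pow_sub_div_mul_pow_le hp0 (pow_pos hp0 n) hestn).trans ?_
  gcongr
  exact le_add_of_nonneg_right zero_le_one

theorem ModPFiberGeomIntegral.isDomain {R : Type*} [CommRing R] {p : ℕ} [Fact p.Prime]
    [CharP (modPFiber R p) p] (h : ModPFiberGeomIntegral R p) : IsDomain (modPFiber R p) := by
  let _ : Algebra (ZMod p) (modPFiber R p) := ZMod.algebra _ p
  have : IsDomain (TensorProduct (ZMod p) (AlgebraicClosure (ZMod p)) (modPFiber R p)) := h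
  exact Function.Injective.isDomain (Algebra.TensorProduct.includeRight :
      modPFiber R p →ₐ[ZMod p] TensorProduct (ZMod p) (AlgebraicClosure (ZMod p)) (modPFiber R p))
    (Algebra.TensorProduct.includeRight_injective
      (algebraMap (ZMod p) (AlgebraicClosure (ZMod p))).injective)

theorem ModPFiberFiniteColength.finite {R : Type*} [CommRing R] {p : ℕ} [Fact p.Prime]
    [CharP (modPFiber R p) p] {J : Ideal (modPFiber R p)} (h : ModPFiberFiniteColength p J) :
    Finite (modPFiber R p ⧸ J) :=
  let _ : Algebra (ZMod p) (modPFiber R p) := ZMod.algebra _ p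
  have : Module.Finite (ZMod p) (modPFiber R p ⧸ J) := h
  Module.finite_of_finite (ZMod p)

end FiberColength

theorem fiber_colength_frobeniusPower_succ_diff_le
    (R : Type*) [CommRing R] [IsDomain R] [CharZero R]
    (hfg : Algebra.FiniteType ℤ R)
    (𝒜 : ℕ → Submodule ℤ R) [GradedAlgebra 𝒜]
    -- `R` is generated in degree 1 over `R₀`
    (hgen : Algebra.adjoin ℤ ((𝒜 0 : Set R) ∪ (𝒜 1 : Set R)) = ⊤)
    (I : Ideal R) (hIhom : I.IsHomogeneous 𝒜) (hIne : I ≠ ⊤)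
    (d : ℕ) (hd : 2 ≤ d)
    -- for almost all primes `p` (say `p ≥ N₀`) the fiber `R_p` has
    -- characteristic `p`, is a standard graded ring of dimension `d` which is
    -- geometrically integral, and `I_p ⊂ R_p` has finite colength:
    (N₀ : ℕ)
    (hchar : ∀ p : ℕ, p.Prime → N₀ ≤ p → CharP (modPFiber R p) p)
    (hstd : ∀ p : ℕ, (hp : p.Prime) → (hN : N₀ ≤ p) →
      IsField (Subring.closure ((Ideal.Quotient.mk _) '' (𝒜 0 : Set R)) :
        Subring (modPFiber R p)))
    (hdim : ∀ p : ℕ, (hp : p.Prime) → (hN : N₀ ≤ p) →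
      ringKrullDim (modPFiber R p) = d)
    (hgeom : ∀ p : ℕ, (hp : p.Prime) → (hN : N₀ ≤ p) →
      haveI : Fact p.Prime := ⟨hp⟩
      haveI := hchar p hp hN
      ModPFiberGeomIntegral R p)
    (hfin : ∀ p : ℕ, (hp : p.Prime) → (hN : N₀ ≤ p) →
      haveI := hchar p hp hN
      ModPFiberFiniteColength p (modPFiberIdeal I p)) :
    ∃ C₁ : ℝ, 0 < C₁ ∧ ∃ N₁ : ℕ,
      ∀ p : ℕ, (hp : p.Prime) → (hN : N₁ ≤ p) → (hN₀ : N₀ ≤ p) → ∀ n : ℕ, 1 ≤ n →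
        haveI := hchar p hp hN₀
        |(fiberColength p ((modPFiberIdeal I p).frobeniusPower (p ^ n)) : ℝ) /
              (p : ℝ) ^ (n * d) -
            (fiberColength p ((modPFiberIdeal I p).frobeniusPower (p ^ (n + 1))) : ℝ) /
              (p : ℝ) ^ ((n + 1) * d)| ≤
          C₁ / (p : ℝ) ^ ((n : ℤ) - d + 2) := by
  have hgeom' (p : ℕ) (hp : p.Prime) (hN : N₀ ≤ p) : IsDomain (modPFiber R p) :=
    have : Fact p.Prime := ⟨hp⟩
    have := hchar p hp hN
    (hgeom p hp hN).isDomain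
  have hfin' (p : ℕ) (hp : p.Prime) (hN : N₀ ≤ p) :
      Finite (modPFiber R p ⧸ modPFiberIdeal I p) :=
    have : Fact p.Prime := ⟨hp⟩
    have := hchar p hp hN
    (hfin p hp hN).finite
  obtain ⟨C, hC0, hC⟩ := fiber_colength_frobeniusPower_succ_diff_le_general I d
    (eventually_almostAllPrimes_iff.2 ⟨N₀, hgeom'⟩) (eventually_almostAllPrimes_iff.2 ⟨N₀, hdim⟩)
    (eventually_almostAllPrimes_iff.2 ⟨N₀, hfin'⟩)
  obtain ⟨N₁, hN₁⟩ := eventually_almostAllPrimes_iff.1 hC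
  refine ⟨C, hC0, N₁, fun p hp hN hN₀ n _ => ?_⟩
  have := hchar p hp hN₀
  refine (hN₁ p hp hN n).trans ?_
  rw [← zpow_natCast]
  have hp0 : (0 : ℝ) < p := mod_cast hp.pos
  gcongr
  · exact_mod_cast hp.one_le
  · omega
end

section
/- Let R be a standard graded ring of dimension d ≥ 2 and characteristic p > 0, and I ⊂ R a graded ideal of finite colength. Let n_0 ≥ 1 be an integer with R_{n_0} ⊆ I and let μ ≥ μ(I) be at least the number of generators of I. Then each truncated Hilbert–Kunz density function f_n: [1, ∞) → [0, ∞) is compactly supported, and the union of supports ∪_{n≥1} supp(f_n) is contained in [1, n_0·μ]. -/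
/-- The length (= `k`-vector space dimension) of the degree-`m` graded piece of
`R ⧸ I`. -/
noncomputable def gradedPieceLength {k R : Type*} [Field k] [CommRing R] [Algebra k R]
    (𝒜 : ℕ → Submodule k R) (I : Ideal R) (m : ℕ) : ℕ :=
  Module.finrank k ((𝒜 m).map (Ideal.Quotient.mkₐ k I).toLinearMap)

/-- The `n`-th truncated Hilbert–Kunz density function of the pair `(R, I)`:
`f_n(x) = (1/q^(d−1)) · ℓ((R/I^{[q]})_⌊xq⌋)` with `q = p^n`. -/
noncomputable def truncHKDensity {k R : Type*} [Field k] [CommRing R] [Algebra k R]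
    (𝒜 : ℕ → Submodule k R) (I : Ideal R) (p d n : ℕ) (x : ℝ) : ℝ :=
  (gradedPieceLength 𝒜 (I.frobeniusPower (p ^ n)) ⌊x * (p : ℝ) ^ n⌋₊ : ℝ) /
    ((p : ℝ) ^ n) ^ (d - 1)

/-!
Since `R` is generated in degree one, `R_{a + b} = R_a R_b`, so `R_m ⊆ (R_{n₀})^{μq} R ⊆ I^{μq}` as
soon as `m ≥ n₀μq`. If `μ ≥ 1`, a product of `μq` of the `μ` generators of `I` repeats one of them
at least `q` times, hence `I^{μq} ⊆ I^{[q]}` and `(R / I^{[q]})_m = 0`. If `μ = 0`, then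
`R_{n₀} = 0`, so `R` is generated over a field by nilpotent elements, which forces `d ≤ 0`.
-/

section Grading

variable {k R : Type*} [CommSemiring k] [Semiring R] [Algebra k R]

lemma graded_pow_le {ι : Type*} [AddMonoid ι] (𝒜 : ι → Submodule k R) [SetLike.GradedMonoid 𝒜]
    (i : ι) (m : ℕ) : 𝒜 i ^ m ≤ 𝒜 (m • i) := by
  induction m with
  | zero =>
    rw [pow_zero, zero_nsmul, Submodule.one_le]
    exact SetLike.one_mem_graded 𝒜
  | succ m ih =>
    rw [pow_succ, succ_nsmul, Submodule.mul_le]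
    exact fun a ha b hb => SetLike.mul_mem_graded (ih ha) hb

variable (𝒜 : ℕ → Submodule k R) [GradedAlgebra 𝒜]

lemma decompose_mem_pow_of_adjoin_eq_top (hgen : Algebra.adjoin k (𝒜 1 : Set R) = ⊤)
    (x : R) (m : ℕ) : (DirectSum.decompose 𝒜 x m : R) ∈ 𝒜 1 ^ m := by
  have of_mem {i : ℕ} {y : R} (hy : y ∈ 𝒜 i) (hpow : y ∈ 𝒜 1 ^ i) (m : ℕ) :
      (DirectSum.decompose 𝒜 y m : R) ∈ 𝒜 1 ^ m := by
    obtain rfl | hne := eq_or_ne i m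
    · rwa [DirectSum.decompose_of_mem_same 𝒜 hy]
    · rw [DirectSum.decompose_of_mem_ne 𝒜 hy hne]
      exact zero_mem _
  have hx : x ∈ Algebra.adjoin k (𝒜 1 : Set R) := hgen ▸ Algebra.mem_top
  induction hx using Algebra.adjoin_induction generalizing m with
  | mem y hy => exact of_mem hy ((pow_one (𝒜 1)).symm ▸ hy) m
  | algebraMap r =>
    exact of_mem (SetLike.algebraMap_mem_graded 𝒜 r)
      ((pow_zero (𝒜 1)).symm ▸ Submodule.algebraMap_mem r) m
  | add y z _ _ hy hz =>
    rw [DirectSum.decompose_add, DirectSum.add_apply, Submodule.coe_add]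
    exact add_mem (hy m) (hz m)
  | mul y z _ _ hy hz =>
    classical
    rw [DirectSum.decompose_mul, DirectSum.coe_mul_apply]
    refine sum_mem fun ij hij => ?_
    rw [← (Finset.mem_filter.mp hij).2, pow_add]
    exact Submodule.mul_mem_mul (hy ij.1) (hz ij.2)

lemma graded_eq_pow_of_adjoin_eq_top (hgen : Algebra.adjoin k (𝒜 1 : Set R) = ⊤) (m : ℕ) :
    𝒜 m = 𝒜 1 ^ m := by
  refine le_antisymm (fun x hx => ?_) (by simpa using graded_pow_le 𝒜 1 m)
  simpa only [DirectSum.decompose_of_mem_same 𝒜 hx]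
    using decompose_mem_pow_of_adjoin_eq_top 𝒜 hgen x m

end Grading

lemma graded_le_pow_of_graded_le {k R : Type*} [CommSemiring k] [CommSemiring R] [Algebra k R]
    (𝒜 : ℕ → Submodule k R) [GradedAlgebra 𝒜] (hgen : Algebra.adjoin k (𝒜 1 : Set R) = ⊤)
    {I : Ideal R} {a : ℕ} (hI : 𝒜 a ≤ I.restrictScalars k) {j m : ℕ} (hm : a * j ≤ m) :
    𝒜 m ≤ (I ^ j).restrictScalars k := by
  obtain rfl | hj := eq_or_ne j 0
  · intro x _
    simp
  obtain ⟨r, rfl⟩ := Nat.exists_eq_add_of_le hm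
  calc 𝒜 (a * j + r)
      = 𝒜 a ^ j * 𝒜 r := by
        simp only [graded_eq_pow_of_adjoin_eq_top 𝒜 hgen (a * j + r),
          graded_eq_pow_of_adjoin_eq_top 𝒜 hgen a, graded_eq_pow_of_adjoin_eq_top 𝒜 hgen r,
          pow_add, pow_mul]
    _ ≤ I.restrictScalars k ^ j * 𝒜 r := by gcongr
    _ = (I ^ j).restrictScalars k * 𝒜 r := by rw [Submodule.restrictScalars_pow hj]
    _ ≤ (I ^ j).restrictScalars k :=
        Submodule.mul_le.mpr fun _ hx y _ => Ideal.mul_mem_right y (I ^ j) hx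

lemma sup_pow_card_mul_le_sup_pow {R ι : Type*} [CommSemiring R] {s : Finset ι} (hs : s.Nonempty)
    (J : ι → Ideal R) (q : ℕ) : s.sup J ^ (s.card * q) ≤ s.sup fun i => J i ^ q := by
  induction hs using Finset.Nonempty.cons_induction with
  | singleton i => simp
  | cons i s hi _ ih =>
    rw [Finset.sup_cons, Finset.sup_cons, Finset.card_cons, add_one_mul, add_comm]
    exact Ideal.sup_pow_add_le_pow_sup_pow.trans (sup_le_sup_left ih _)

lemma span_range_pow_le_frobeniusPower {R ι : Type*} [CommRing R] [Fintype ι] [Nonempty ι]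
    (g : ι → R) (q : ℕ) :
    Ideal.span (Set.range g) ^ (Fintype.card ι * q) ≤
      (Ideal.span (Set.range g)).frobeniusPower q := by
  have hspan : Ideal.span (Set.range g) = Finset.univ.sup fun i => Ideal.span {g i} := by
    rw [Finset.sup_univ_eq_iSup, ← Ideal.span_iUnion, Set.iUnion_singleton_eq_range]
  calc Ideal.span (Set.range g) ^ (Fintype.card ι * q)
      ≤ Finset.univ.sup fun i => Ideal.span {g i} ^ q := by
        rw [hspan]
        exact sup_pow_card_mul_le_sup_pow Finset.univ_nonempty _ q
    _ ≤ (Ideal.span (Set.range g)).frobeniusPower q := by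
        refine Finset.sup_le fun i _ => ?_
        rw [Ideal.span_singleton_pow, Ideal.span_singleton_le_iff_mem]
        exact Ideal.subset_span ⟨g i, Ideal.subset_span ⟨i, rfl⟩, rfl⟩

lemma krullDimLE_zero_of_isIntegral (A B : Type*) [CommRing A] [CommRing B] [Algebra A B]
    [Ring.KrullDimLE 0 A] [Algebra.IsIntegral A B] : Ring.KrullDimLE 0 B :=
  .mk₀ fun P _ => Ideal.isMaximal_of_isIntegral_of_isMaximal_comap (R := A) P inferInstance

lemma krullDimLE_zero_of_adjoin_isNilpotent {A B : Type*} [CommRing A] [CommRing B] [Algebra A B]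
    [Ring.KrullDimLE 0 A] {s : Set B} (hs : ∀ x ∈ s, IsNilpotent x)
    (hgen : Algebra.adjoin A s = ⊤) : Ring.KrullDimLE 0 B := by
  have hint : ∀ x ∈ s, IsIntegral A x := by
    intro x hx
    obtain ⟨n, hn⟩ := hs x hx
    exact ⟨Polynomial.X ^ n, Polynomial.monic_X_pow n, by simp [hn]⟩
  have : Algebra.IsIntegral A B :=
    integralClosure_eq_top_iff.mp (top_le_iff.mp (hgen ▸ Algebra.adjoin_le hint))
  exact krullDimLE_zero_of_isIntegral A B

lemma krullDimLE_zero_of_graded_eq_bot {A B : Type*} [CommRing A] [CommRing B] [Algebra A B]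
    [Ring.KrullDimLE 0 A] (𝒜 : ℕ → Submodule A B) [SetLike.GradedMonoid 𝒜]
    (hgen : Algebra.adjoin A (𝒜 1 : Set B) = ⊤) {a : ℕ} (ha : 𝒜 a = ⊥) :
    Ring.KrullDimLE 0 B := by
  refine krullDimLE_zero_of_adjoin_isNilpotent (fun x hx => ⟨a, ?_⟩) hgen
  simpa [ha] using SetLike.pow_mem_graded a hx

section Density

variable {k R : Type*} [Field k] [CommRing R] [Algebra k R] (𝒜 : ℕ → Submodule k R)

lemma gradedPieceLength_eq_zero_of_le {J : Ideal R} {m : ℕ} (h : 𝒜 m ≤ J.restrictScalars k) :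
    gradedPieceLength 𝒜 J m = 0 := by
  have hbot : (𝒜 m).map (Ideal.Quotient.mkₐ k J).toLinearMap = ⊥ :=
    LinearMap.le_ker_iff_map.mp fun x hx => Ideal.Quotient.eq_zero_iff_mem.mpr (h hx)
  rw [gradedPieceLength, hbot, finrank_bot]

variable [GradedAlgebra 𝒜]

lemma truncHKDensity_eq_zero_of_mul_card_le {ι : Type*} [Fintype ι] [Nonempty ι] (g : ι → R)
    (hgen : Algebra.adjoin k (𝒜 1 : Set R) = ⊤) {n₀ : ℕ}
    (hn₀ : 𝒜 n₀ ≤ (Ideal.span (Set.range g)).restrictScalars k) (p d n : ℕ) {x : ℝ}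
    (hx : n₀ * Fintype.card ι ≤ x) :
    truncHKDensity 𝒜 (Ideal.span (Set.range g)) p d n x = 0 := by
  have hdeg : n₀ * (Fintype.card ι * p ^ n) ≤ ⌊x * (p : ℝ) ^ n⌋₊ := by
    apply Nat.le_floor
    push_cast
    rw [← mul_assoc]
    gcongr
  have hle : 𝒜 ⌊x * (p : ℝ) ^ n⌋₊ ≤
      ((Ideal.span (Set.range g)).frobeniusPower (p ^ n)).restrictScalars k :=
    (graded_le_pow_of_graded_le 𝒜 hgen hn₀ hdeg).trans
      (span_range_pow_le_frobeniusPower g (p ^ n))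
  rw [truncHKDensity, gradedPieceLength_eq_zero_of_le 𝒜 hle, Nat.cast_zero, zero_div]

theorem truncHKDensity_support_subset_general (hgen : Algebra.adjoin k (𝒜 1 : Set R) = ⊤)
    (d : ℕ) (hd : 0 < d) (hdim : ringKrullDim R = d) (p : ℕ) (I : Ideal R)
    (n₀ : ℕ) (hn₀I : (𝒜 n₀ : Set R) ⊆ (I : Set R))
    (μ : ℕ) (g : Fin μ → R) (hg : Ideal.span (Set.range g) = I) (n : ℕ) :
    {x : ℝ | 1 ≤ x ∧ truncHKDensity 𝒜 I p d n x ≠ 0} ⊆ Set.Icc (1 : ℝ) (n₀ * μ) := by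
  subst hg
  rintro x ⟨hx_one, hx_ne⟩
  refine ⟨hx_one, ?_⟩
  contrapose! hx_ne
  cases isEmpty_or_nonempty (Fin μ) with
  | inl _ =>
    have hbot : 𝒜 n₀ = ⊥ := (Submodule.eq_bot_iff _).mpr fun y hy => by
      simpa [Set.range_eq_empty] using hn₀I hy
    have hdim_le : ringKrullDim R ≤ 0 :=
      Ring.krullDimLE_iff.mp (krullDimLE_zero_of_graded_eq_bot 𝒜 hgen hbot)
    rw [hdim] at hdim_le
    exact absurd (mod_cast hdim_le) hd.not_ge
  | inr _ =>
    exact truncHKDensity_eq_zero_of_mul_card_le 𝒜 g hgen hn₀I p d n (by simpa using hx_ne.le)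

end Density

theorem truncHKDensity_support_subset
    {k R : Type*} [Field k] [CommRing R] [Algebra k R]
    (𝒜 : ℕ → Submodule k R) [GradedAlgebra 𝒜]
    -- `R` is standard graded: `R₀ = k` and `R` is generated over `k` in degree 1
    (h0 : 𝒜 0 = Submodule.span k {1})
    (hgen : Algebra.adjoin k (𝒜 1 : Set R) = ⊤)
    (d : ℕ) (hd : 2 ≤ d) (hdim : ringKrullDim R = d)
    (p : ℕ) (hp : p.Prime) [CharP R p]
    (I : Ideal R) (hIhom : I.IsHomogeneous 𝒜)
    (hIfin : FiniteDimensional k (R ⧸ I))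
    -- `n₀ ≥ 1` is such that `R_{n₀} ⊆ I`
    (n₀ : ℕ) (hn₀ : 1 ≤ n₀) (hn₀I : (𝒜 n₀ : Set R) ⊆ (I : Set R))
    -- `μ` is at least the number of generators of `I`
    (μ : ℕ) (g : Fin μ → R) (hg : Ideal.span (Set.range g) = I) :
    ∀ n : ℕ, 1 ≤ n →
      {x : ℝ | 1 ≤ x ∧ truncHKDensity 𝒜 I p d n x ≠ 0} ⊆
        Set.Icc (1 : ℝ) (n₀ * μ) := by
  intro n _
  exact truncHKDensity_support_subset_general 𝒜 hgen d (by lia) hdim p I n₀ hn₀I μ g hg n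
end

section
/- Let R be a standard graded domain of dimension d ≥ 2 over an algebraically closed field of characteristic p > 0 and let I ⊂ R be a homogeneous ideal of finite colength such that I contains a nonzero element of degree 1 (i.e., I ∩ R_1 ≠ 0). Then for every x > 1 the Hilbert–Kunz density function satisfies the strict inequality f(R, I)(x) < F_R(x), where F_R(x) = e_0(R, m)·x^{d−1}/(d−1)! is the Hilbert–Samuel density function of R. -/
/-!
Write `q = p ^ n` and `m = ⌊x q⌋`, and let `y ∈ I` be nonzero of degree `e < x` (here `e = 1`).
Multiplication by `y ^ q` embeds `R_{m - e q}` into the kernel of `R_m → R ⧸ I^{[q]}`, so the two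
truncated densities differ by at least `ℓ(R_{m - e q}) / q ^ (d - 1)`. Now `R` has transcendence
degree at least `d` over `k`, and a transcendence basis can be chosen among the linear forms;
counting monomials in `d` of them bounds `ℓ(R_j)` from below by `(j + 1) ^ (d - 1) / (d - 1)!`. As
`m - e q + 1 ≥ (x - e) q`, the gap is at least `(x - e) ^ (d - 1) / (d - 1)!`, a positive constant
independent of `n`, which therefore persists in the limit.
-/

open Filter

/-- The `n`-th truncated Hilbert–Samuel density function of `R`:
`F_n(x) = (1/q^{d−1}) ℓ(R_{⌊xq⌋})` with `q = p^n`; its limit is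
`F_R(x) = e₀(R,𝐦) x^{d−1}/(d−1)!`. -/
noncomputable def truncHSDensity {k R : Type*} [Field k] [CommRing R] [Algebra k R]
    (𝒜 : ℕ → Submodule k R) (p d n : ℕ) (x : ℝ) : ℝ :=
  (Module.finrank k (𝒜 ⌊x * (p : ℝ) ^ n⌋₊) : ℝ) / ((p : ℝ) ^ n) ^ (d - 1)

section TranscendenceDegree

theorem ringKrullDim_le_of_isIntegral {S R : Type*} [CommRing S] [CommRing R] (f : S →+* R)
    (hf : f.IsIntegral) : ringKrullDim R ≤ ringKrullDim S := by
  algebraize [f]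
  have : Algebra.IsIntegral S R := ⟨hf⟩
  -- Incomparability: contraction of primes along an integral map is strictly monotone.
  refine Order.krullDim_le_of_strictMono (PrimeSpectrum.comap f) fun P Q hPQ => ?_
  exact Ideal.IsIntegral.comap_lt_comap (R := S) (A := R) hPQ

theorem ringKrullDim_le_toENat_trdeg (k R : Type*) [Field k] [CommRing R] [Algebra k R]
    [Algebra.FiniteType k R] :
    ringKrullDim R ≤ (Algebra.trdeg k R).toENat := by
  cases subsingleton_or_nontrivial R
  · simp [ringKrullDim_eq_bot_of_subsingleton]
  obtain ⟨s, g, hinj, hint⟩ := exists_integral_inj_algHom_of_fg k R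
  have hdim : ringKrullDim R ≤ s := by
    simpa [MvPolynomial.ringKrullDim_of_isNoetherianRing] using
      ringKrullDim_le_of_isIntegral g.toRingHom hint
  have htrdeg : (s : Cardinal) ≤ Algebra.trdeg k R := by
    have hs := lift_trdeg_le_of_injective g hinj
    simpa [MvPolynomial.trdeg_of_isDomain] using hs
  exact hdim.trans (by exact_mod_cast Cardinal.natCast_le_toENat.2 htrdeg)

theorem exists_algebraicIndependent_mem_of_le_trdeg {k R : Type*} [CommRing k] [Nontrivial k]
    [CommRing R] [NoZeroDivisors R] [Algebra k R] [FaithfulSMul k R] (s : Set R)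
    [Algebra.IsAlgebraic (Algebra.adjoin k s) R] {n : ℕ} (hn : n ≤ Algebra.trdeg k R) :
    ∃ z : Fin n → R, (∀ i, z i ∈ s) ∧ AlgebraicIndependent k z := by
  obtain ⟨t, hts, ht⟩ := exists_isTranscendenceBasis_subset (R := k) s
  have hcard : Cardinal.lift (Cardinal.mk (Fin n)) ≤ Cardinal.lift (Cardinal.mk t) := by
    simpa [ht.cardinalMk_eq_trdeg] using hn
  obtain ⟨e⟩ := Cardinal.lift_mk_le'.1 hcard
  exact ⟨fun i => e i, fun i => hts (e i).2, ht.1.comp e e.injective⟩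

end TranscendenceDegree

section HilbertFunction

theorem gradedPiece_fg_of_gradeZero_fg {ι k R : Type*} [DecidableEq ι] [AddRightCancelMonoid ι]
    [CommSemiring k] [CommSemiring R] [IsNoetherianRing R] [Algebra k R]
    (𝒜 : ι → Submodule k R) [GradedAlgebra 𝒜] (h0 : (𝒜 0).FG) (i : ι) : (𝒜 i).FG := by
  obtain ⟨T, hT, hspan⟩ := (Submodule.fg_span_iff_fg_span_finset_subset (𝒜 i : Set R)).1
    (IsNoetherian.noetherian (Submodule.span R (𝒜 i : Set R)))
  suffices h : 𝒜 i = 𝒜 0 * Submodule.span k (T : Set R) from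
    h ▸ h0.mul (Submodule.fg_span T.finite_toSet)
  refine le_antisymm (fun a ha => ?_) (Submodule.mul_le.2 fun r hr b hb => ?_)
  · obtain ⟨c, -, hc⟩ := Submodule.mem_span_finset.1
      (hspan ▸ Submodule.subset_span ha : a ∈ Submodule.span R (T : Set R))
    -- Taking degree-`i` components replaces each coefficient by its degree-zero component.
    have ha' : a = ∑ t ∈ T, (DirectSum.decompose 𝒜 (c t) 0 : R) * t := by
      conv_lhs => rw [← DirectSum.decompose_of_mem_same 𝒜 ha, ← hc]
      rw [DirectSum.decompose_sum, DFinsupp.finsetSum_apply, AddSubmonoidClass.coe_finsetSum]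
      refine Finset.sum_congr rfl fun t ht => ?_
      have hmul := DirectSum.coe_decompose_mul_add_of_right_mem 𝒜 (i := 0) (a := c t) (hT ht)
      rwa [zero_add] at hmul
    rw [ha']
    exact Submodule.sum_mem _ fun t ht =>
      Submodule.mul_mem_mul (SetLike.coe_mem _) (Submodule.subset_span ht)
  · simpa using SetLike.mul_mem_graded hr (Submodule.span_le.2 hT hb)

theorem multichoose_card_le_finrank_gradedPiece {σ k R : Type*} [Fintype σ] [CommRing k]
    [Nontrivial k] [CommRing R] [Algebra k R] (𝒜 : ℕ → Submodule k R) [SetLike.GradedMonoid 𝒜]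
    {z : σ → R} (hz : ∀ i, z i ∈ 𝒜 1) (hind : AlgebraicIndependent k z) (j : ℕ)
    [Module.Finite k (𝒜 j)] :
    (Fintype.card σ).multichoose j ≤ Module.finrank k (𝒜 j) := by
  classical
  let A := (Finset.univ : Finset σ).finsuppAntidiag j
  let monomialValue (a : σ →₀ ℕ) : R := MvPolynomial.aeval z (MvPolynomial.monomial a (1 : k))
  have hmem (a : A) : monomialValue a ∈ 𝒜 j := by
    have hdeg : ∑ i, a.1 i = j := (Finset.mem_finsuppAntidiag.1 a.2).1
    simpa [monomialValue, MvPolynomial.aeval_monomial, Finsupp.prod_fintype, hdeg] using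
      SetLike.prod_pow_mem_graded 𝒜 (fun _ => 1) z a.1 (F := Finset.univ) fun i _ => hz i
  have hli : LinearIndependent k monomialValue := by
    simpa [Function.comp_def, monomialValue] using
      (MvPolynomial.basisMonomials σ k).linearIndependent.map' (MvPolynomial.aeval z).toLinearMap
        (LinearMap.ker_eq_bot.2 hind)
  have hli' : LinearIndependent k fun a : A => (⟨monomialValue a, hmem a⟩ : 𝒜 j) :=
    .of_comp (𝒜 j).subtype (hli.comp _ Subtype.val_injective)
  simpa [A, Finset.card_finsuppAntidiag_nat_eq_multichoose] using hli'.fintype_card_le_finrank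

theorem pow_div_factorial_le_multichoose (α : Type*) [Field α] [LinearOrder α]
    [IsStrictOrderedRing α] (n j : ℕ) :
    ((j : α) + 1) ^ n / n.factorial ≤ (n + 1).multichoose j := by
  have hpow := Nat.pow_le_choose (α := α) n (n + j)
  rw [show n + j + 1 - n = j + 1 by omega, Nat.choose_symm_add] at hpow
  simpa [Nat.multichoose_eq, Nat.add_right_comm n 1 j] using hpow

theorem pow_div_factorial_le_finrank_gradedPiece {k R : Type*} [Field k] [CommRing R] [IsDomain R]
    [Algebra k R] (𝒜 : ℕ → Submodule k R) [SetLike.GradedMonoid 𝒜]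
    [∀ m, FiniteDimensional k (𝒜 m)] (hgen : Algebra.adjoin k (𝒜 1 : Set R) = ⊤)
    {d : ℕ} (hdim : (d + 1 : ℕ) ≤ ringKrullDim R) (j : ℕ) :
    ((j : ℝ) + 1) ^ d / d.factorial ≤ Module.finrank k (𝒜 j) := by
  obtain ⟨T, hT⟩ := Module.Finite.iff_fg.1 (inferInstance : Module.Finite k (𝒜 1))
  have : Algebra.FiniteType k R := ⟨⟨T, by rw [← Algebra.adjoin_span, hT, hgen]⟩⟩
  have : Algebra.IsAlgebraic (Algebra.adjoin k (𝒜 1 : Set R)) R :=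
    ⟨fun r => isAlgebraic_algebraMap (⟨r, hgen ▸ trivial⟩ : Algebra.adjoin k (𝒜 1 : Set R))⟩
  have htrdeg : (d + 1 : ℕ) ≤ Algebra.trdeg k R :=
    Cardinal.natCast_le_toENat.1 (by exact_mod_cast hdim.trans (ringKrullDim_le_toENat_trdeg k R))
  obtain ⟨z, hz, hind⟩ := exists_algebraicIndependent_mem_of_le_trdeg (𝒜 1 : Set R) htrdeg
  have hcount := multichoose_card_le_finrank_gradedPiece 𝒜 hz hind j
  rw [Fintype.card_fin] at hcount
  exact (pow_div_factorial_le_multichoose ℝ d j).trans (by exact_mod_cast hcount)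

end HilbertFunction

section QuotientLength

theorem finrank_map_add_finrank_le {k V W : Type*} [DivisionRing k] [AddCommGroup V] [Module k V]
    [AddCommGroup W] [Module k W] (f : V →ₗ[k] W) {N P : Submodule k V} [FiniteDimensional k P]
    (hNP : N ≤ P) (hN : N ≤ LinearMap.ker f) :
    Module.finrank k (P.map f) + Module.finrank k N ≤ Module.finrank k P := by
  have hker : N.comap P.subtype ≤ LinearMap.ker (f.domRestrict P) := fun v hv => hN hv
  calc Module.finrank k (P.map f) + Module.finrank k N
      = Module.finrank k (LinearMap.range (f.domRestrict P)) +
          Module.finrank k (N.comap P.subtype) := by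
        rw [LinearMap.range_domRestrict, (Submodule.comapSubtypeEquivOfLe hNP).finrank_eq]
    _ ≤ Module.finrank k (LinearMap.range (f.domRestrict P)) +
          Module.finrank k (LinearMap.ker (f.domRestrict P)) := by
        gcongr
        exact Submodule.finrank_mono hker
    _ = Module.finrank k P := LinearMap.finrank_range_add_finrank_ker _

theorem gradedPieceLength_add_finrank_le {k R : Type*} [Field k] [CommRing R] [Algebra k R]
    (𝒜 : ℕ → Submodule k R) [SetLike.GradedMul 𝒜] {J : Ideal R} {f : R} (hfJ : f ∈ J)
    (hf : IsLeftRegular f) {e : ℕ} (hfe : f ∈ 𝒜 e) (j : ℕ) [FiniteDimensional k (𝒜 (e + j))] :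
    gradedPieceLength 𝒜 J (e + j) + Module.finrank k (𝒜 j) ≤ Module.finrank k (𝒜 (e + j)) := by
  have hdeg : (𝒜 j).map (LinearMap.mulLeft k f) ≤ 𝒜 (e + j) :=
    Submodule.map_le_iff_le_comap.2 fun r hr => SetLike.mul_mem_graded hfe hr
  have hker : (𝒜 j).map (LinearMap.mulLeft k f) ≤
      LinearMap.ker (Ideal.Quotient.mkₐ k J).toLinearMap :=
    Submodule.map_le_iff_le_comap.2 fun r _ =>
      Ideal.Quotient.eq_zero_iff_mem.2 (J.mul_mem_right r hfJ)
  rw [(Submodule.equivMapOfInjective (LinearMap.mulLeft k f) hf (𝒜 j)).finrank_eq]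
  exact finrank_map_add_finrank_le _ hdeg hker

theorem pow_mem_frobeniusPower_s16 {R : Type*} [CommRing R] {I : Ideal R} {y : R} (hy : y ∈ I)
    (q : ℕ) : y ^ q ∈ I.frobeniusPower q :=
  Ideal.subset_span ⟨y, hy, rfl⟩

end QuotientLength

theorem truncHKDensity_add_le_truncHSDensity {k R : Type*} [Field k] [CommRing R] [IsDomain R]
    [Algebra k R] (𝒜 : ℕ → Submodule k R) [SetLike.GradedMonoid 𝒜]
    [∀ m, FiniteDimensional k (𝒜 m)] (hgen : Algebra.adjoin k (𝒜 1 : Set R) = ⊤)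
    {d : ℕ} (hdim : (d + 1 : ℕ) ≤ ringKrullDim R) {p : ℕ} (hp : 0 < p) {I : Ideal R} {y : R}
    {e : ℕ} (hye : y ∈ 𝒜 e) (hyI : y ∈ I) (hy0 : y ≠ 0) {x : ℝ} (hx : e ≤ x) (n : ℕ) :
    truncHKDensity 𝒜 I p (d + 1) n x + (x - e) ^ d / d.factorial ≤
      truncHSDensity 𝒜 p (d + 1) n x := by
  have hfloor : p ^ n * e ≤ ⌊x * (p : ℝ) ^ n⌋₊ := Nat.le_floor <| by
    push_cast
    rw [mul_comm]
    gcongr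
  obtain ⟨j, hj⟩ := Nat.exists_eq_add_of_le hfloor
  have hxj : (x - e) * (p : ℝ) ^ n ≤ j + 1 := by
    have := Nat.lt_floor_add_one (x * (p : ℝ) ^ n)
    rw [hj] at this
    push_cast at this
    linarith
  have hlow : (x - e) ^ d / d.factorial * ((p : ℝ) ^ n) ^ d ≤ Module.finrank k (𝒜 j) :=
    calc (x - e) ^ d / d.factorial * ((p : ℝ) ^ n) ^ d
        = ((x - e) * (p : ℝ) ^ n) ^ d / d.factorial := by rw [mul_pow, div_mul_eq_mul_div]
      _ ≤ ((j : ℝ) + 1) ^ d / d.factorial := by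
        have : 0 ≤ x - e := sub_nonneg.2 hx
        gcongr
      _ ≤ Module.finrank k (𝒜 j) := pow_div_factorial_le_finrank_gradedPiece 𝒜 hgen hdim j
  have hlen : (gradedPieceLength 𝒜 (I.frobeniusPower (p ^ n)) (p ^ n * e + j) : ℝ) +
      Module.finrank k (𝒜 j) ≤ Module.finrank k (𝒜 (p ^ n * e + j)) := by
    exact_mod_cast gradedPieceLength_add_finrank_le 𝒜 (pow_mem_frobeniusPower_s16 hyI (p ^ n))
      (IsLeftCancelMulZero.mul_left_cancel_of_ne_zero (pow_ne_zero _ hy0))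
      (SetLike.pow_mem_graded (p ^ n) hye) j
  rw [truncHKDensity, truncHSDensity, hj, Nat.add_sub_cancel, le_div_iff₀ (by positivity), add_mul,
    div_mul_cancel₀ _ (by positivity)]
  linarith

theorem hkDensity_lt_hsDensity_of_degree_one_element_general {k R : Type*} [Field k] [CommRing R]
    [IsDomain R] [IsNoetherianRing R] [Algebra k R] (𝒜 : ℕ → Submodule k R) [GradedAlgebra 𝒜]
    (h0 : 𝒜 0 = Submodule.span k {1}) (hgen : Algebra.adjoin k (𝒜 1 : Set R) = ⊤)
    {d : ℕ} (hd : 1 ≤ d) (hdim : ringKrullDim R = d) {p : ℕ} (hp : 0 < p) (I : Ideal R)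
    {y : R} {e : ℕ} (hye : y ∈ 𝒜 e) (hyI : y ∈ I) (hy0 : y ≠ 0) {x : ℝ} (hx : e < x) {fx Fx : ℝ}
    (hf : Tendsto (fun n => truncHKDensity 𝒜 I p d n x) atTop (nhds fx))
    (hF : Tendsto (fun n => truncHSDensity 𝒜 p d n x) atTop (nhds Fx)) :
    fx < Fx := by
  obtain ⟨d, rfl⟩ := Nat.exists_eq_add_of_le' hd
  have (m : ℕ) : FiniteDimensional k (𝒜 m) :=
    .of_fg (gradedPiece_fg_of_gradeZero_fg 𝒜 (h0 ▸ Submodule.fg_span_singleton 1) m)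
  have hgap : fx + (x - e) ^ d / d.factorial ≤ Fx :=
    le_of_tendsto_of_tendsto' (hf.add_const _) hF fun n =>
      truncHKDensity_add_le_truncHSDensity 𝒜 hgen hdim.ge hp hye hyI hy0 hx.le n
  have hpos : 0 < (x - e) ^ d / d.factorial := by
    have : 0 < x - e := sub_pos.2 hx
    positivity
  linarith

theorem hkDensity_lt_hsDensity_of_degree_one_element
    {k R : Type*} [Field k] [IsAlgClosed k] [CommRing R] [IsDomain R]
    [IsNoetherianRing R] [Algebra k R]
    (𝒜 : ℕ → Submodule k R) [GradedAlgebra 𝒜]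
    -- `R` is standard graded: `R₀ = k` and `R` is generated over `k` in degree 1
    (h0 : 𝒜 0 = Submodule.span k {1})
    (hgen : Algebra.adjoin k (𝒜 1 : Set R) = ⊤)
    (d : ℕ) (hd : 2 ≤ d) (hdim : ringKrullDim R = d)
    (p : ℕ) (hp : p.Prime) [CharP R p]
    (I : Ideal R) (hIhom : I.IsHomogeneous 𝒜) (hIne : I ≠ ⊤)
    (hIfin : FiniteDimensional k (R ⧸ I))
    -- `I` contains a nonzero element of degree one
    (y : R) (hy1 : y ∈ 𝒜 1) (hyI : y ∈ I) (hy0 : y ≠ 0) :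
    ∀ x : ℝ, 1 < x → ∀ fx Fx : ℝ,
      Tendsto (fun n => truncHKDensity 𝒜 I p d n x) atTop (nhds fx) →
      Tendsto (fun n => truncHSDensity 𝒜 p d n x) atTop (nhds Fx) →
      fx < Fx := fun _ hx _ _ =>
  hkDensity_lt_hsDensity_of_degree_one_element_general 𝒜 h0 hgen (one_le_two.trans hd) hdim hp.pos
    I hy1 hyI hy0 (by exact_mod_cast hx)
end
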